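/- arXiv:1909.10683 — 2 statements merged into one kernel-verified Lean document; each statement's English description precedes it below -/
import Mathlib

section
/- For every integer q ≥ 2 and every real ε ∈ (0,1) there exist a real R > 0 and a constant c > 0 (both depending only on ε and q) and an integer n₀ such that for every n ≥ n₀ there is a q-ary code C ⊆ (Fin q)ⁿ with |C| ≥ 2^(R·n) with the following property: for all reals γ, δ ≥ 0 such that there exists an integer z with 1 ≤ z ≤ q−1 and γ + 2zδ ≤ (1−ε)·((2q−1)z − z²)/q (i.e., (γ,δ) lies in the scaled feasibility region (1−ε)·F_q), the code C is list-decodable from ⌊δn⌋ deletions and ⌊γn⌋ insertions with list size at most c · 2^(2^(2^(log* n))). -/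
/-- The length of a longest common subsequence of `x` and `y`. -/
noncomputable def LCS {α : Type*} (x y : List α) : ℕ :=
  sSup {n | ∃ u : List α, u.Sublist x ∧ u.Sublist y ∧ u.length = n}

/-- `C` is list-decodable from `D` deletions and `I` insertions with list size `L`. -/
def listDecodable {α : Type*} (C : Finset (List α)) (D I : ℕ) (L : ℝ) : Prop :=
  ∀ y : List α,
    (({x | x ∈ C ∧ ∃ u : List α, u.Sublist x ∧ u.Sublist y ∧
        x.length - u.length ≤ D ∧ y.length - u.length ≤ I} : Set (List α)).ncard : ℝ) ≤ L

/-- `log* n`: the least `k` such that the `k`-fold iterate of `m ↦ ⌈log₂ m⌉` sends `n` to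
a value `≤ 1`. -/
noncomputable def logStar (n : ℕ) : ℕ := sInf {k | (Nat.clog 2)^[k] n ≤ 1}

/-!
For fixed `z` charge `1` for an insertion and `2 z` for a deletion. If `x` lies in the list of `y`
for parameters in the scaled region, then for some `z` the cost of turning `x` into `y` is at most
`(1 - ε) T n` with `T = ((2 q - 1) z - z ^ 2) / q`.

The inner words are `K` cyclic run words of equal length, with run lengths `N, N ^ 3, N ^ 5, …`.
If the symbol frequencies of `y` were the same at the scales `N ^ (2 k)` and `N ^ (2 k + 2)` on
either side of the `k`-th run length, that word would be at cost at least about `T` per symbol. So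
whenever the cost is smaller by a factor `1 - ε`, the sum of the squared block frequencies of `y`
drops by a definite amount between the two scales. Hence `y` is close to at most `L` inner words,
where `L` does not depend on `K`.

An exponential moment of the cost, computed along cut points of `y` rounded to a grid, then shows
that for large `K` every `y` is close to at most a fraction `8 ^ (-m)` of all concatenations of `m`
inner words. Choosing `2 ^ m` of these one at a time so as to control the sum over `y` of
`(2 ^ m) ^ |C ∩ S y|`, where `S y` is the set of concatenations close to `y`, keeps this sum at most
`3` times the number of words `y`, that is `2 ^ O(m)`. So all the lists have bounded size, without
any growth in `log* n`.
-/

section LongestCommonSubsequence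

variable {α : Type*}

lemma bddAbove_length_common_sublist (x y : List α) :
    BddAbove {n | ∃ u : List α, u.Sublist x ∧ u.Sublist y ∧ u.length = n} := by
  refine ⟨x.length, ?_⟩
  rintro _ ⟨u, hx, -, rfl⟩
  exact hx.length_le

lemma length_le_LCS {u x y : List α} (hx : u.Sublist x) (hy : u.Sublist y) :
    u.length ≤ LCS x y :=
  le_csSup (bddAbove_length_common_sublist x y) ⟨u, hx, hy, rfl⟩

lemma exists_length_eq_LCS (x y : List α) :
    ∃ u : List α, u.Sublist x ∧ u.Sublist y ∧ u.length = LCS x y :=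
  Nat.sSup_mem (s := {n | ∃ u : List α, u.Sublist x ∧ u.Sublist y ∧ u.length = n})
    ⟨0, [], by simp, by simp, rfl⟩ (bddAbove_length_common_sublist x y)

lemma LCS_le_length_left (x y : List α) : LCS x y ≤ x.length := by
  obtain ⟨u, hx, -, hu⟩ := exists_length_eq_LCS x y
  exact hu ▸ hx.length_le

lemma LCS_le_length_right (x y : List α) : LCS x y ≤ y.length := by
  obtain ⟨u, -, hy, hu⟩ := exists_length_eq_LCS x y
  exact hu ▸ hy.length_le

lemma LCS_mono_right {x y y' : List α} (h : y.Sublist y') : LCS x y ≤ LCS x y' := by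
  obtain ⟨u, hx, hy, hu⟩ := exists_length_eq_LCS x y
  exact hu ▸ length_le_LCS hx (hy.trans h)

lemma exists_LCS_append_le (x₁ x₂ y : List α) :
    ∃ i ≤ y.length, LCS (x₁ ++ x₂) y ≤ LCS x₁ (y.take i) + LCS x₂ (y.drop i) := by
  obtain ⟨u, hx, hy, hu⟩ := exists_length_eq_LCS (x₁ ++ x₂) y
  obtain ⟨u₁, u₂, rfl, hx₁, hx₂⟩ := List.sublist_append_iff.1 hx
  obtain ⟨y₁, y₂, rfl, hy₁, hy₂⟩ := List.append_sublist_iff.1 hy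
  refine ⟨y₁.length, by simp, ?_⟩
  rw [← hu, List.take_left, List.drop_left, List.length_append]
  exact add_le_add (length_le_LCS hx₁ hy₁) (length_le_LCS hx₂ hy₂)

lemma LCS_replicate_le [DecidableEq α] (r : ℕ) (a : α) (v : List α) :
    LCS (List.replicate r a) v ≤ min r (v.count a) := by
  obtain ⟨u, hx, hy, hu⟩ := exists_length_eq_LCS (List.replicate r a) v
  obtain ⟨n, hn, rfl⟩ := List.sublist_replicate_iff.1 hx
  rw [← hu, List.length_replicate]
  exact le_min hn (by simpa using hy.count_le a)

end LongestCommonSubsequence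

section SymbolIndicator

variable {α : Type*} [DecidableEq α]

/-- The indicator function of the set of positions at which the word `v` carries the symbol `a`;
it vanishes past the end of `v`. -/
noncomputable def symbolIndicator (v : List α) (a : α) (t : ℕ) : ℝ :=
  if v[t]? = some a then 1 else 0

lemma symbolIndicator_nonneg (v : List α) (a : α) (t : ℕ) : 0 ≤ symbolIndicator v a t := by
  unfold symbolIndicator
  split_ifs <;> simp

lemma symbolIndicator_le_one (v : List α) (a : α) (t : ℕ) : symbolIndicator v a t ≤ 1 := by
  unfold symbolIndicator
  split_ifs <;> simp

lemma sum_symbolIndicator_le_one [Fintype α] (v : List α) (t : ℕ) :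
    ∑ a, symbolIndicator v a t ≤ 1 := by
  unfold symbolIndicator
  rcases v[t]? with _ | c <;> simp

lemma symbolIndicator_drop (v : List α) (a : α) (i t : ℕ) :
    symbolIndicator (v.drop i) a t = symbolIndicator v a (i + t) := by
  simp only [symbolIndicator, List.getElem?_drop]

lemma count_take_eq_sum_symbolIndicator (v : List α) (a : α) (i : ℕ) :
    ((v.take i).count a : ℝ) = ∑ t ∈ Finset.range i, symbolIndicator v a t := by
  induction i with
  | zero => simp
  | succ i ih =>
    rw [List.take_add_one, List.count_append, Nat.cast_add, ih, Finset.sum_range_succ,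
      symbolIndicator]
    rcases v[i]? with _ | c <;> simp [List.count_singleton]

lemma sum_symbolIndicator_Ico_le (v : List α) (a : α) {b c : ℕ} (hbc : b ≤ c) :
    ∑ t ∈ Finset.Ico b c, symbolIndicator v a t ≤ (c : ℝ) - b := by
  refine (Finset.sum_le_sum fun t _ => symbolIndicator_le_one v a t).trans ?_
  simp [Nat.cast_sub hbc]

end SymbolIndicator

section Runs

variable {α : Type*}

/-- The word made of `J` runs of length `r`, the `j`-th run repeating the symbol `s j`. -/
def runs (s : ℕ → α) (r J : ℕ) : List α :=
  (List.range (r * J)).map fun i => s (i / r)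

lemma length_runs (s : ℕ → α) (r J : ℕ) : (runs s r J).length = r * J := by
  simp [runs]

lemma runs_succ (s : ℕ → α) (r J : ℕ) :
    runs s r (J + 1) = List.replicate r (s 0) ++ runs (fun j => s (j + 1)) r J := by
  rcases r.eq_zero_or_pos with rfl | hr
  · simp [runs]
  rw [runs, runs, mul_add_one, add_comm, List.range_add, List.map_append, List.map_map]
  congr 1
  · rw [List.eq_replicate_iff]
    simp only [List.length_map, List.length_range, List.mem_map, List.mem_range, true_and]
    rintro _ ⟨i, hi, rfl⟩
    rw [Nat.div_eq_of_lt hi]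
  · refine List.map_congr_left fun i _ => ?_
    rw [Function.comp_apply, Nat.add_div_left i hr]

lemma runs_ne_runs {s : ℕ → α} (hs : s 0 ≠ s 1) {r r' J J' : ℕ} (hr : 0 < r) (hrr : r < r')
    (hJ : 2 ≤ J) (hJ' : 1 ≤ J') : runs s r J ≠ runs s r' J' := by
  intro h
  have hget : (runs s r J)[r]? = (runs s r' J')[r]? := by rw [h]
  have hlt : r < r * J := by nlinarith
  have hlt' : r < r' * J' := by nlinarith
  simp only [runs, List.getElem?_map, List.getElem?_range hlt, List.getElem?_range hlt',
    Option.map_some, Nat.div_self hr, Nat.div_eq_of_lt hrr, Option.some_inj] at hget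
  exact hs hget.symm

/-- An optimal common subsequence cuts `v` into one interval per run, and a run can only match
the occurrences of its own symbol in its interval. -/
lemma exists_monotone_LCS_runs_le [DecidableEq α] (s : ℕ → α) (r J : ℕ) (v : List α) :
    ∃ b : ℕ → ℕ, Monotone b ∧ b 0 = 0 ∧ (∀ j, b j ≤ v.length) ∧
      (LCS (runs s r J) v : ℝ) ≤ ∑ j ∈ Finset.range J,
        min (r : ℝ) (∑ t ∈ Finset.Ico (b j) (b (j + 1)), symbolIndicator v (s j) t) := by
  induction J generalizing s v with
  | zero =>
    refine ⟨fun _ => 0, monotone_const, rfl, fun _ => Nat.zero_le _, ?_⟩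
    simpa [runs] using LCS_le_length_left (runs s r 0) v
  | succ J ih =>
    obtain ⟨i, hi, happ⟩ := exists_LCS_append_le (List.replicate r (s 0))
      (runs (fun j => s (j + 1)) r J) v
    obtain ⟨b, hb, hb0, hbv, hlcs⟩ := ih (fun j => s (j + 1)) (v.drop i)
    obtain ⟨c, hc0, hc⟩ : ∃ c : ℕ → ℕ, c 0 = 0 ∧ ∀ j, c (j + 1) = i + b j :=
      ⟨fun j => Nat.casesOn j 0 fun j => i + b j, rfl, fun _ => rfl⟩
    refine ⟨c, monotone_nat_of_le_succ fun j => ?_, hc0, fun j => ?_, ?_⟩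
    · cases j with
      | zero => simp [hc0]
      | succ j =>
        rw [hc, hc]
        exact Nat.add_le_add_left (hb j.le_succ) i
    · cases j with
      | zero => simp [hc0]
      | succ j =>
        have := hbv j
        rw [List.length_drop] at this
        rw [hc]
        omega
    · have hfirst : (LCS (List.replicate r (s 0)) (v.take i) : ℝ) ≤
          min (r : ℝ) (∑ t ∈ Finset.Ico 0 i, symbolIndicator v (s 0) t) := by
        rw [← Finset.range_eq_Ico, ← count_take_eq_sum_symbolIndicator]
        exact_mod_cast LCS_replicate_le r (s 0) (v.take i)
      simp only [symbolIndicator_drop, Finset.sum_Ico_add (symbolIndicator v _)] at hlcs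
      rw [runs_succ, Finset.sum_range_succ', add_comm]
      simp only [hc, hc0, hb0, zero_add, add_comm i] at hlcs ⊢
      exact (Nat.cast_le.2 happ).trans (by push_cast; exact add_le_add hfirst hlcs)

end Runs

section BlockAverage

variable {M N : ℕ} {g : ℕ → ℝ}

/-- The conditional expectation of the function `g` on `ℕ` given the partition of `ℕ` into
consecutive blocks of length `M`, as a function of the position. -/
noncomputable def blockAvg (M : ℕ) (g : ℕ → ℝ) (t : ℕ) : ℝ :=
  (∑ i ∈ Finset.range M, g (M * (t / M) + i)) / M

lemma blockAvg_congr {s t : ℕ} (h : s / M = t / M) : blockAvg M g s = blockAvg M g t := by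
  rw [blockAvg, blockAvg, h]

lemma blockAvg_one (g : ℕ → ℝ) (t : ℕ) : blockAvg 1 g t = g t := by
  simp [blockAvg]

lemma blockAvg_nonneg (hg : ∀ t, 0 ≤ g t) (t : ℕ) : 0 ≤ blockAvg M g t :=
  div_nonneg (Finset.sum_nonneg fun _ _ => hg _) M.cast_nonneg

lemma blockAvg_le_one (hg : ∀ t, g t ≤ 1) (t : ℕ) : blockAvg M g t ≤ 1 := by
  refine div_le_one_of_le₀ ((Finset.sum_le_sum fun i _ => hg _).trans ?_) M.cast_nonneg
  simp

lemma sum_blockAvg {ι : Type*} (s : Finset ι) (f : ι → ℕ → ℝ) (t : ℕ) :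
    ∑ a ∈ s, blockAvg M (f a) t = blockAvg M (fun t => ∑ a ∈ s, f a t) t := by
  simp only [blockAvg, ← Finset.sum_div]
  rw [Finset.sum_comm]

lemma sum_range_mul (M W : ℕ) (h : ℕ → ℝ) :
    ∑ t ∈ Finset.range (M * W), h t =
      ∑ w ∈ Finset.range W, ∑ i ∈ Finset.range M, h (M * w + i) := by
  induction W with
  | zero => simp
  | succ W ih => rw [mul_add_one, Finset.sum_range_add, ih, Finset.sum_range_succ]

lemma sum_blockAvg_mul (hM : 0 < M) (W : ℕ) (g : ℕ → ℝ) {h : ℕ → ℝ}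
    (hh : ∀ s t, s / M = t / M → h s = h t) :
    ∑ t ∈ Finset.range (M * W), blockAvg M g t * h t = ∑ t ∈ Finset.range (M * W), g t * h t := by
  have hM' : (M : ℝ) ≠ 0 := by positivity
  rw [sum_range_mul, sum_range_mul]
  refine Finset.sum_congr rfl fun w _ => ?_
  have hdiv : ∀ i ∈ Finset.range M, (M * w + i) / M = M * w / M := fun i hi => by
    rw [Nat.mul_add_div hM, Nat.div_eq_of_lt (Finset.mem_range.1 hi), add_zero,
      Nat.mul_div_cancel_left w hM]
  calc ∑ i ∈ Finset.range M, blockAvg M g (M * w + i) * h (M * w + i)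
      = ∑ _i ∈ Finset.range M, blockAvg M g (M * w) * h (M * w) :=
        Finset.sum_congr rfl fun _ hi => by rw [blockAvg_congr (hdiv _ hi), hh _ _ (hdiv _ hi)]
    _ = ∑ i ∈ Finset.range M, g (M * w + i) * h (M * w) := by
        rw [Finset.sum_const, Finset.card_range, nsmul_eq_mul, ← Finset.sum_mul, blockAvg,
          Nat.mul_div_cancel_left w hM]
        field_simp
    _ = ∑ i ∈ Finset.range M, g (M * w + i) * h (M * w + i) :=
        Finset.sum_congr rfl fun i hi => by rw [hh _ _ (hdiv i hi)]

lemma abs_sum_range_sub_blockAvg_le (hM : 0 < M) (hg₀ : ∀ t, 0 ≤ g t) (hg₁ : ∀ t, g t ≤ 1)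
    (b : ℕ) : |∑ t ∈ Finset.range b, (g t - blockAvg M g t)| ≤ M := by
  have hsum : ∑ t ∈ Finset.range (M * (b / M)), blockAvg M g t =
      ∑ t ∈ Finset.range (M * (b / M)), g t := by
    simpa using sum_blockAvg_mul hM (b / M) g (h := fun _ => 1) fun _ _ _ => rfl
  rw [← Nat.div_add_mod b M, Finset.sum_range_add, Finset.sum_sub_distrib, hsum, sub_self,
    zero_add]
  calc |∑ i ∈ Finset.range (b % M), (g (M * (b / M) + i) - blockAvg M g (M * (b / M) + i))|
      ≤ ∑ i ∈ Finset.range (b % M), |g (M * (b / M) + i) - blockAvg M g (M * (b / M) + i)| :=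
        Finset.abs_sum_le_sum_abs _ _
    _ ≤ ∑ _i ∈ Finset.range (b % M), (1 : ℝ) := Finset.sum_le_sum fun i _ => by
        rw [abs_le]
        constructor <;> linarith [hg₀ (M * (b / M) + i), hg₁ (M * (b / M) + i),
          blockAvg_nonneg (M := M) hg₀ (M * (b / M) + i),
          blockAvg_le_one (M := M) hg₁ (M * (b / M) + i)]
    _ ≤ M := by simpa using (Nat.mod_lt b hM).le

lemma abs_sum_Ico_sub_blockAvg_le (hM : 0 < M) (hg₀ : ∀ t, 0 ≤ g t) (hg₁ : ∀ t, g t ≤ 1)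
    {b c : ℕ} (hbc : b ≤ c) : |∑ t ∈ Finset.Ico b c, (g t - blockAvg M g t)| ≤ 2 * M := by
  rw [Finset.sum_Ico_eq_sub _ hbc, two_mul]
  exact (abs_sub _ _).trans (add_le_add (abs_sum_range_sub_blockAvg_le hM hg₀ hg₁ c)
    (abs_sum_range_sub_blockAvg_le hM hg₀ hg₁ b))

lemma sum_sq_blockAvg_sub_blockAvg_mul (hM : 0 < M) (hN : 0 < N) (W : ℕ) (g : ℕ → ℝ) :
    ∑ t ∈ Finset.range (M * N * W), (blockAvg M g t - blockAvg (M * N) g t) ^ 2 =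
      ∑ t ∈ Finset.range (M * N * W), blockAvg M g t ^ 2 -
        ∑ t ∈ Finset.range (M * N * W), blockAvg (M * N) g t ^ 2 := by
  have hcoarse : ∑ t ∈ Finset.range (M * N * W), blockAvg (M * N) g t * blockAvg (M * N) g t =
      ∑ t ∈ Finset.range (M * N * W), g t * blockAvg (M * N) g t :=
    sum_blockAvg_mul (Nat.mul_pos hM hN) W g fun _ _ => blockAvg_congr
  have hfine : ∑ t ∈ Finset.range (M * N * W), blockAvg M g t * blockAvg (M * N) g t =
      ∑ t ∈ Finset.range (M * N * W), g t * blockAvg (M * N) g t := by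
    rw [mul_assoc]
    refine sum_blockAvg_mul hM (N * W) g fun s t hst => blockAvg_congr ?_
    rw [← Nat.div_div_eq_div_mul, hst, Nat.div_div_eq_div_mul]
  simp only [sub_sq, mul_assoc, Finset.sum_add_distrib, Finset.sum_sub_distrib, ← Finset.mul_sum]
  simp only [mul_assoc] at hcoarse hfine
  simp only [sq, hfine, hcoarse]
  ring

end BlockAverage

section RegionBound

variable {q z : ℕ}

/-- The bound on `γ + 2 z δ` in the `z`-th constraint of the feasibility region `F_q`. -/
noncomputable def regionBound (q z : ℕ) : ℝ :=
  ((2 * (q : ℝ) - 1) * z - (z : ℝ) ^ 2) / q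

lemma mul_regionBound (hq : q ≠ 0) :
    q * regionBound q z = (2 * (q : ℝ) - 1) * z - (z : ℝ) ^ 2 :=
  mul_div_cancel₀ _ (Nat.cast_ne_zero.2 hq)

lemma one_le_regionBound (hz : 1 ≤ z) (hzq : z + 1 ≤ q) : 1 ≤ regionBound q z := by
  have hz' : (1 : ℝ) ≤ z := by exact_mod_cast hz
  have hzq' : (z : ℝ) + 1 ≤ q := by exact_mod_cast hzq
  rw [regionBound, one_le_div (by linarith)]
  nlinarith

lemma regionBound_nonneg (hzq : z + 1 ≤ q) : 0 ≤ regionBound q z := by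
  rcases z.eq_zero_or_pos with rfl | hz
  · simp [regionBound]
  · exact zero_le_one.trans (one_le_regionBound hz hzq)

lemma regionBound_le_two_mul (q z : ℕ) : regionBound q z ≤ 2 * z := by
  refine div_le_of_le_mul₀ q.cast_nonneg (by positivity) ?_
  nlinarith [z.cast_nonneg (α := ℝ)]

end RegionBound

section PeriodInequality

variable {p s r z : ℝ}

lemma mul_min_le_of_mul_le_one (hs : 0 ≤ s) (hz : 0 ≤ z) (hpz : p * (1 + 2 * z) ≤ 1) :
    (1 + 2 * z) * min r (p * s) ≤ s :=
  calc (1 + 2 * z) * min r (p * s) ≤ (1 + 2 * z) * (p * s) := by gcongr; exact min_le_right _ _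
    _ = p * (1 + 2 * z) * s := by ring
    _ ≤ s := mul_le_of_le_one_left hs hpz

/-- The point is that `1 / p` lies above its tangent `2 k - k² p` at `p = 1 / k`. -/
lemma mul_tangent_le_sub_mul_min (hr : 0 ≤ r) (hp : 0 ≤ p)
    (hpz : 1 < p * (1 + 2 * z)) (k : ℝ) :
    r * (2 * k - k ^ 2 * p - (1 + 2 * z)) ≤ s - (1 + 2 * z) * min r (p * s) := by
  have hp' : 0 < p := hp.lt_of_ne' fun h => by norm_num [h] at hpz
  have htangent : 2 * k - k ^ 2 * p ≤ 1 / p := by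
    rw [le_div_iff₀ hp']
    nlinarith [sq_nonneg (k * p - 1)]
  have hneg : 1 / p - (1 + 2 * z) ≤ 0 := by
    rw [sub_nonpos, div_le_iff₀ hp']
    linarith
  calc r * (2 * k - k ^ 2 * p - (1 + 2 * z)) ≤ r * (1 / p - (1 + 2 * z)) := by gcongr
    _ ≤ min r (p * s) * (1 / p - (1 + 2 * z)) :=
        mul_le_mul_of_nonpos_right (min_le_left _ _) hneg
    _ = min r (p * s) / p - (1 + 2 * z) * min r (p * s) := by ring
    _ ≤ s - (1 + 2 * z) * min r (p * s) := by
        gcongr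
        rw [div_le_iff₀ hp', mul_comm s]
        exact min_le_right _ _

lemma mul_le_sum_add_sub_mul_min {ι : Type*} [Fintype ι] {p s : ι → ℝ} {r : ℝ} (hr : 0 ≤ r)
    (hp : ∀ a, 0 ≤ p a) (hs : ∀ a, 0 ≤ s a) (hp₁ : ∑ a, p a ≤ 1) (z : ℕ) :
    r * ((2 * (Fintype.card ι : ℝ) - 1) * z - (z : ℝ) ^ 2) ≤
      ∑ a, (s a + 2 * z * r - (1 + 2 * z) * min r (p a * s a)) := by
  classical
  set A : Finset ι := {a | 1 < p a * (1 + 2 * z)} with hA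
  set k : ℝ := (A.card : ℝ) with hk
  have hsymbol : ∀ a, (if a ∈ A then r * (2 * k - k ^ 2 * p a - (1 + 2 * z)) else 0) ≤
      s a - (1 + 2 * z) * min r (p a * s a) := by
    intro a
    split_ifs with ha
    · exact mul_tangent_le_sub_mul_min hr (hp a) (by simpa [hA] using ha) k
    · exact sub_nonneg.2
        (mul_min_le_of_mul_le_one (hs a) z.cast_nonneg (by simpa [hA] using ha))
  have hpA : k ^ 2 * ∑ a ∈ A, p a ≤ k ^ 2 := by
    refine mul_le_of_le_one_right (sq_nonneg k) (le_trans ?_ hp₁)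
    exact Finset.sum_le_sum_of_subset_of_nonneg A.subset_univ fun a _ _ => hp a
  -- no integer lies strictly between `z` and `z + 1`
  have hint : 0 ≤ (k - z) * (k - z - 1) := by
    rcases le_or_gt A.card z with h | h
    · have : k ≤ z := by rw [hk]; exact_mod_cast h
      nlinarith
    · have : (z : ℝ) + 1 ≤ k := by rw [hk]; exact_mod_cast h
      nlinarith
  calc r * ((2 * (Fintype.card ι : ℝ) - 1) * z - (z : ℝ) ^ 2)
      ≤ r * (k * (2 * k) - k ^ 2 * ∑ a ∈ A, p a - k * (1 + 2 * z)) +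
          Fintype.card ι * (2 * z * r) := by nlinarith
    _ = ∑ a, ((if a ∈ A then r * (2 * k - k ^ 2 * p a - (1 + 2 * z)) else 0) + 2 * z * r) := by
        rw [Finset.sum_add_distrib, Finset.sum_ite_mem, Finset.univ_inter, ← Finset.mul_sum]
        simp only [Finset.sum_sub_distrib, Finset.sum_const, ← Finset.mul_sum, Finset.card_univ,
          nsmul_eq_mul, ← hk]
    _ ≤ ∑ a, (s a + 2 * z * r - (1 + 2 * z) * min r (p a * s a)) :=
        Finset.sum_le_sum fun a _ => by linarith [hsymbol a]

end PeriodInequality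

section IndelCost

variable {α : Type*}

/-- The weighted indel distance from `x` to `y`: an insertion costs `1`, a deletion `2 z`. -/
noncomputable def indelCost (z : ℕ) (x y : List α) : ℝ :=
  ((y.length : ℝ) - LCS x y) + 2 * z * ((x.length : ℝ) - LCS x y)

lemma indelCost_nonneg (z : ℕ) (x y : List α) : 0 ≤ indelCost z x y := by
  have hx : (0 : ℝ) ≤ x.length - LCS x y := by
    rw [sub_nonneg]
    exact_mod_cast LCS_le_length_left x y
  have hy : (0 : ℝ) ≤ y.length - LCS x y := by
    rw [sub_nonneg]
    exact_mod_cast LCS_le_length_right x y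
  unfold indelCost
  positivity

lemma length_sub_length_le_indelCost (z : ℕ) (x y : List α) :
    (y.length : ℝ) - x.length ≤ indelCost z x y := by
  have hx : (0 : ℝ) ≤ x.length - LCS x y := by
    rw [sub_nonneg]
    exact_mod_cast LCS_le_length_left x y
  have : 0 ≤ 2 * z * ((x.length : ℝ) - LCS x y) := by positivity
  unfold indelCost
  linarith

end IndelCost

section RunCost

variable {α : Type*} [DecidableEq α]

/-- A lower bound for the weighted indel distance from the run `a ^ r` to the part of `v` at the
positions in `[b, c)`. -/
noncomputable def runCost (z r : ℕ) (v : List α) (a : α) (b c : ℕ) : ℝ :=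
  ((c : ℝ) - b) + 2 * z * r -
    (1 + 2 * z) * min (r : ℝ) (∑ t ∈ Finset.Ico b c, symbolIndicator v a t)

lemma runCost_nonneg (z r : ℕ) (v : List α) (a : α) {b c : ℕ} (hbc : b ≤ c) :
    0 ≤ runCost z r v a b c := by
  have hr := min_le_left (r : ℝ) (∑ t ∈ Finset.Ico b c, symbolIndicator v a t)
  have hcount := (min_le_right (r : ℝ) _).trans (sum_symbolIndicator_Ico_le v a hbc)
  have := mul_le_mul_of_nonneg_left hr (by positivity : (0 : ℝ) ≤ 2 * z)
  unfold runCost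
  linarith

lemma exists_monotone_sum_runCost_le (z : ℕ) (s : ℕ → α) (r J : ℕ) (v : List α) :
    ∃ b : ℕ → ℕ, Monotone b ∧ b 0 = 0 ∧ (∀ j, b j ≤ v.length) ∧
      ∑ j ∈ Finset.range J, runCost z r v (s j) (b j) (b (j + 1)) ≤
        indelCost z (runs s r J) v := by
  obtain ⟨b, hb, hb0, hbv, hlcs⟩ := exists_monotone_LCS_runs_le s r J v
  refine ⟨b, hb, hb0, hbv, ?_⟩
  have htel : ∑ j ∈ Finset.range J, ((b (j + 1) : ℝ) - b j) ≤ v.length := by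
    rw [Finset.sum_range_sub fun j => (b j : ℝ)]
    simpa [hb0] using hbv J
  have := mul_le_mul_of_nonneg_left hlcs (by positivity : (0 : ℝ) ≤ 1 + 2 * z)
  simp only [runCost, Finset.sum_sub_distrib, Finset.sum_add_distrib, ← Finset.mul_sum,
    Finset.sum_const, Finset.card_range, nsmul_eq_mul] at htel ⊢
  rw [indelCost, length_runs, Nat.cast_mul]
  linarith

end RunCost

section ScaleDeviation

variable {α : Type*} [Fintype α] [DecidableEq α] {M M' : ℕ}

/-- The `ℓ¹` distance between the local symbol frequencies of `v` at the scales `M` and `M'`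
around the position `t`. -/
noncomputable def scaleDeviation (v : List α) (M M' t : ℕ) : ℝ :=
  ∑ a, |blockAvg M (symbolIndicator v a) t - blockAvg M' (symbolIndicator v a) t|

lemma scaleDeviation_nonneg (v : List α) (M M' t : ℕ) : 0 ≤ scaleDeviation v M M' t :=
  Finset.sum_nonneg fun _ _ => abs_nonneg _

lemma sum_blockAvg_symbolIndicator_le_one (v : List α) (M t : ℕ) :
    ∑ a, blockAvg M (symbolIndicator v a) t ≤ 1 := by
  rw [sum_blockAvg]
  exact blockAvg_le_one (sum_symbolIndicator_le_one v) t

lemma abs_sum_symbolIndicator_sub_le (hM : 0 < M) (v : List α) (a : α) {b c t₀ : ℕ} (hbc : b ≤ c)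
    (hblock : ∀ t ∈ Finset.Ico b c, t / M' = t₀ / M') :
    |∑ t ∈ Finset.Ico b c, symbolIndicator v a t -
        blockAvg M' (symbolIndicator v a) t₀ * ((c : ℝ) - b)| ≤
      2 * M + ∑ t ∈ Finset.Ico b c, scaleDeviation v M M' t := by
  set g := symbolIndicator v a
  have hconst : blockAvg M' g t₀ * ((c : ℝ) - b) = ∑ t ∈ Finset.Ico b c, blockAvg M' g t := by
    rw [Finset.sum_congr rfl fun t ht => blockAvg_congr (g := g) (hblock t ht)]
    simp [Nat.cast_sub hbc, mul_comm]
  have hsplit : ∑ t ∈ Finset.Ico b c, g t - blockAvg M' g t₀ * ((c : ℝ) - b) =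
      ∑ t ∈ Finset.Ico b c, (g t - blockAvg M g t) +
        ∑ t ∈ Finset.Ico b c, (blockAvg M g t - blockAvg M' g t) := by
    rw [hconst, Finset.sum_sub_distrib, Finset.sum_sub_distrib]
    ring
  rw [hsplit]
  refine (abs_add_le _ _).trans (add_le_add (abs_sum_Ico_sub_blockAvg_le hM
    (symbolIndicator_nonneg v a) (symbolIndicator_le_one v a) hbc) ?_)
  refine (Finset.abs_sum_le_sum_abs _ _).trans (Finset.sum_le_sum fun t _ => ?_)
  exact Finset.single_le_sum (f := fun a =>
    |blockAvg M (symbolIndicator v a) t - blockAvg M' (symbolIndicator v a) t|)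
    (fun _ _ => abs_nonneg _) (Finset.mem_univ a)

lemma le_runCost_add_of_block (z r : ℕ) (hM : 0 < M) (v : List α) (a : α) {b c t₀ : ℕ} (hbc : b ≤ c)
    (hblock : ∀ t ∈ Finset.Ico b c, t / M' = t₀ / M') :
    ((c : ℝ) - b) + 2 * z * r -
        (1 + 2 * z) * min (r : ℝ) (blockAvg M' (symbolIndicator v a) t₀ * ((c : ℝ) - b)) ≤
      runCost z r v a b c +
        (1 + 2 * z) * (2 * M + ∑ t ∈ Finset.Ico b c, scaleDeviation v M M' t) := by
  have hmin : ∀ x y : ℝ, min (r : ℝ) x ≤ min (r : ℝ) y + |x - y| := fun x y => by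
    have h := (le_abs_self _).trans (abs_min_sub_min_le_max (r : ℝ) x r y)
    rw [sub_self, abs_zero, max_eq_right (abs_nonneg _)] at h
    linarith
  have := mul_le_mul_of_nonneg_left
    ((hmin _ _).trans (add_le_add_right (abs_sum_symbolIndicator_sub_le hM v a hbc hblock) _))
    (by positivity : (0 : ℝ) ≤ 1 + 2 * z)
  unfold runCost
  linarith

end ScaleDeviation

section CyclicRuns

lemma sum_range_sum_Ico {b : ℕ → ℕ} (hb : Monotone b) (f : ℕ → ℝ) (J : ℕ) :
    ∑ j ∈ Finset.range J, ∑ t ∈ Finset.Ico (b j) (b (j + 1)), f t =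
      ∑ t ∈ Finset.Ico (b 0) (b J), f t := by
  induction J with
  | zero => simp
  | succ J ih =>
    rw [Finset.sum_range_succ, ih, Finset.sum_Ico_consecutive _ (hb J.zero_le) (hb J.le_succ)]

variable {q z M M' : ℕ} {b : ℕ → ℕ}

lemma le_sum_runCost_of_block (r : ℕ) (hM : 0 < M) (v : List (Fin q)) (hb : Monotone b)
    (hblock : b 0 / M' = b q / M') :
    r * ((2 * (q : ℝ) - 1) * z - (z : ℝ) ^ 2) ≤
      ∑ a : Fin q, runCost z r v a (b a) (b (a + 1)) +
        (1 + 2 * z) * (2 * M * q + ∑ t ∈ Finset.Ico (b 0) (b q), scaleDeviation v M M' t) := by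
  have hperiod := mul_le_sum_add_sub_mul_min (r := r) r.cast_nonneg
    (p := fun a : Fin q => blockAvg M' (symbolIndicator v a) (b 0))
    (s := fun a => (b (a + 1) : ℝ) - b a)
    (fun a => blockAvg_nonneg (symbolIndicator_nonneg v a) _)
    (fun a => sub_nonneg.2 (Nat.cast_le.2 (hb (Nat.le_succ _))))
    (sum_blockAvg_symbolIndicator_le_one v M' (b 0)) z
  have hrun : ∀ a : Fin q, _ := fun a =>
    le_runCost_add_of_block (M' := M') (t₀ := b 0) z r hM v a (hb (a : ℕ).le_succ) fun t ht =>
      le_antisymm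
        (hblock ▸ Nat.div_le_div_right ((Finset.mem_Ico.1 ht).2.le.trans (hb a.2)))
        (Nat.div_le_div_right ((hb (Nat.zero_le _)).trans (Finset.mem_Ico.1 ht).1))
  rw [Fintype.card_fin] at hperiod
  refine (hperiod.trans (Finset.sum_le_sum fun a _ => hrun a)).trans (le_of_eq ?_)
  rw [Finset.sum_add_distrib, ← Finset.mul_sum, Finset.sum_add_distrib,
    ← Finset.sum_range fun j => ∑ t ∈ Finset.Ico (b j) (b (j + 1)), scaleDeviation v M M' t,
    sum_range_sum_Ico hb]
  simp only [Finset.sum_const, Finset.card_univ, Fintype.card_fin, nsmul_eq_mul]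
  ring

/-- A period whose interval meets several coarse blocks is simply given up: it is charged to the
block boundaries that it crosses. -/
lemma le_sum_runCost (r : ℕ) (hM : 0 < M) (hz : z + 1 ≤ q) (v : List (Fin q)) (hb : Monotone b) :
    r * (q * regionBound q z) * (1 - (((b q / M' : ℕ) : ℝ) - (b 0 / M' : ℕ))) ≤
      ∑ a : Fin q, runCost z r v a (b a) (b (a + 1)) +
        (1 + 2 * z) * (2 * M * q + ∑ t ∈ Finset.Ico (b 0) (b q), scaleDeviation v M M' t) := by
  have hdev : 0 ≤ ∑ t ∈ Finset.Ico (b 0) (b q), scaleDeviation v M M' t :=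
    Finset.sum_nonneg fun t _ => scaleDeviation_nonneg v M M' t
  rcases (Nat.div_le_div_right (c := M') (hb q.zero_le)).eq_or_lt with h | h
  · rw [h, sub_self, sub_zero, mul_one, mul_regionBound (by omega)]
    exact le_sum_runCost_of_block r hM v hb h
  · have hcross : 1 - (((b q / M' : ℕ) : ℝ) - (b 0 / M' : ℕ)) ≤ 0 := by
      have : ((b 0 / M' : ℕ) : ℝ) + 1 ≤ (b q / M' : ℕ) := by exact_mod_cast h
      linarith
    have hrun : 0 ≤ ∑ a : Fin q, runCost z r v a (b a) (b (a + 1)) :=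
      Finset.sum_nonneg fun a _ => runCost_nonneg z r v a (hb (Nat.le_succ _))
    have hregion := regionBound_nonneg hz
    exact (mul_nonpos_of_nonneg_of_nonpos (by positivity) hcross).trans (by positivity)

lemma exists_monotone_sum_periods_runCost_le [NeZero q] (z r I : ℕ) (v : List (Fin q)) :
    ∃ b : ℕ → ℕ, Monotone b ∧ b 0 = 0 ∧ (∀ j, b j ≤ v.length) ∧
      ∑ i ∈ Finset.range I, ∑ a : Fin q,
        runCost z r v a (b (q * i + a)) (b (q * i + (a + 1))) ≤
          indelCost z (runs (Fin.ofNat q) r (q * I)) v := by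
  obtain ⟨b, hb, hb0, hbv, hcost⟩ :=
    exists_monotone_sum_runCost_le z (Fin.ofNat q) r (q * I) v
  refine ⟨b, hb, hb0, hbv, le_of_eq_of_le ?_ hcost⟩
  rw [sum_range_mul]
  refine Finset.sum_congr rfl fun i _ => ?_
  rw [Finset.sum_range]
  refine Finset.sum_congr rfl fun a _ => ?_
  have : Fin.ofNat q (q * i + a) = a := Fin.ext (by simp [Nat.mod_eq_of_lt a.2])
  rw [this, add_assoc]

lemma le_indelCost_runs_ofNat [NeZero q] (hM : 0 < M) (hz : z + 1 ≤ q) (r I : ℕ)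
    (v : List (Fin q)) :
    r * (q * regionBound q z) * (I - v.length / M') ≤
      indelCost z (runs (Fin.ofNat q) r (q * I)) v +
        (1 + 2 * z) * (2 * M * q * I + ∑ t ∈ Finset.range v.length, scaleDeviation v M M' t) := by
  obtain ⟨b, hb, hb0, hbv, hcost⟩ := exists_monotone_sum_periods_runCost_le z r I v
  have hsum := Finset.sum_le_sum fun i (_ : i ∈ Finset.range I) =>
    le_sum_runCost (M' := M') r hM hz v (b := fun j => b (q * i + j)) fun j j' h =>
      hb (Nat.add_le_add_left h _)
  have hdev : ∑ i ∈ Finset.range I,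
      ∑ t ∈ Finset.Ico (b (q * i + 0)) (b (q * i + q)), scaleDeviation v M M' t ≤
        ∑ t ∈ Finset.range v.length, scaleDeviation v M M' t := by
    refine (sum_range_sum_Ico (b := fun i => b (q * i))
      (fun i i' h => hb (Nat.mul_le_mul_left q h)) _ I).trans_le ?_
    rw [mul_zero, hb0, ← Finset.range_eq_Ico]
    exact Finset.sum_le_sum_of_subset_of_nonneg (Finset.range_subset_range.2 (hbv _))
      fun t _ _ => scaleDeviation_nonneg v M M' t
  have hcross : ∑ i ∈ Finset.range I, (((b (q * i + q) / M' : ℕ) : ℝ) - (b (q * i + 0) / M' : ℕ)) ≤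
      v.length / M' := by
    refine (Finset.sum_range_sub (fun i => ((b (q * i) / M' : ℕ) : ℝ)) I).trans_le ?_
    rw [mul_zero, hb0, Nat.zero_div, Nat.cast_zero, sub_zero]
    exact Nat.cast_div_le.trans (by gcongr; exact hbv _)
  have hregion := regionBound_nonneg hz
  have hcross' := mul_le_mul_of_nonneg_left hcross
    (by positivity : 0 ≤ r * (q * regionBound q z))
  have hdev' := mul_le_mul_of_nonneg_left hdev (by positivity : (0 : ℝ) ≤ 1 + 2 * z)
  simp only [Finset.sum_add_distrib, ← Finset.mul_sum, Finset.sum_sub_distrib, Finset.sum_const,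
    Finset.card_range, nsmul_eq_mul, mul_one] at hsum hcross' hdev'
  linarith

lemma le_indelCost_runs_ofNat_mul [NeZero q] {N : ℕ} (hM : 0 < M) (hN : 0 < N) (hz : z + 1 ≤ q)
    (I : ℕ) (v : List (Fin q)) :
    q * regionBound q z * (M * N * I - v.length / N) ≤
      indelCost z (runs (Fin.ofNat q) (M * N) (q * I)) v + (1 + 2 * z) *
        (2 * q * (M * N * I) / N +
          ∑ t ∈ Finset.range v.length, scaleDeviation v M (M * N ^ 2) t) := by
  have hlower := le_indelCost_runs_ofNat (M' := M * N ^ 2) hM hz (M * N) I v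
  have hM' : (M : ℝ) ≠ 0 := by positivity
  have hmain : ((M * N : ℕ) : ℝ) * (q * regionBound q z) * (I - v.length / (M * N ^ 2 : ℕ)) =
      q * regionBound q z * (M * N * I - v.length / N) := by
    push_cast
    field_simp
  have herror : (2 : ℝ) * M * q * I = 2 * q * (M * N * I) / N := by field_simp
  rwa [hmain, herror] at hlower

/-- The run length `M * N` is the geometric mean of the two scales `M` and `M * N ^ 2` at which the
symbol frequencies of `v` are compared. -/
lemma le_sum_scaleDeviation_of_indelCost_lt [NeZero q] {N V I : ℕ} {ε : ℝ} (hε : 0 ≤ ε)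
    (hM : 0 < M) (hN : 0 < N) (hz : 1 ≤ z) (hzq : z + 1 ≤ q) {v : List (Fin q)}
    (hv : v.length ≤ M * N * I * V) (hNV : 4 * (q : ℝ) ^ 2 + 2 * q ^ 2 * V ≤ N * (ε / 2))
    (hcost : indelCost z (runs (Fin.ofNat q) (M * N) (q * I)) v <
      (1 - ε) * (regionBound q z * (q * (M * N * I)))) :
    ε / (4 * q) * (M * N * I) ≤
      ∑ t ∈ Finset.range v.length, scaleDeviation v M (M * N ^ 2) t := by
  have hlower := le_indelCost_runs_ofNat_mul hM hN hzq I v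
  set S := ∑ t ∈ Finset.range v.length, scaleDeviation v M (M * N ^ 2) t
  set τ := q * regionBound q z with hτ
  set U : ℝ := M * N * I with hU
  have hN' : (0 : ℝ) < N := by exact_mod_cast hN
  have hq : (1 : ℝ) ≤ q := by exact_mod_cast (by omega : 1 ≤ q)
  have hzq' : (z : ℝ) + 1 ≤ q := by exact_mod_cast hzq
  have hS : 0 ≤ S := Finset.sum_nonneg fun t _ => scaleDeviation_nonneg v _ _ t
  have hτ₁ : 1 ≤ τ := one_le_mul_of_one_le_of_one_le hq (one_le_regionBound hz hzq)
  have hτ₂ : τ ≤ 2 * (q : ℝ) ^ 2 := by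
    have := mul_le_mul_of_nonneg_left (regionBound_le_two_mul q z) (by linarith : (0 : ℝ) ≤ q)
    nlinarith
  have hvU : (v.length : ℝ) / N ≤ U * V / N := by
    gcongr
    rw [hU]
    exact_mod_cast hv
  have hboundary : τ * (v.length / N) ≤ 2 * q ^ 2 * (U * V / N) := by gcongr
  have hdeviation : (1 + 2 * z) * (2 * q * U / N + S) ≤ 2 * q * (2 * q * U / N + S) := by
    gcongr
    linarith
  have hNU : (4 * (q : ℝ) ^ 2 + 2 * q ^ 2 * V) * (U / N) ≤ ε / 2 * U :=
    (mul_le_mul_of_nonneg_right hNV (by positivity)).trans_eq (by field_simp)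
  have hεU : ε * U ≤ ε * (τ * U) :=
    mul_le_mul_of_nonneg_left (le_mul_of_one_le_left (by positivity) hτ₁) hε
  rw [show regionBound q z * (q * U) = τ * U by rw [hτ]; ring] at hcost
  rw [div_mul_eq_mul_div, div_le_iff₀ (by positivity)]
  linear_combination 2 * (hlower + hcost + hboundary + hdeviation + hNU + hεU)

end CyclicRuns

section BlockEnergy

variable {α : Type*} [Fintype α] [DecidableEq α] {M N W : ℕ}

/-- The energy at the scale `M` of the symbol frequencies of `v` on the positions below `X`. -/
noncomputable def blockEnergy (v : List α) (M X : ℕ) : ℝ :=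
  ∑ a, ∑ t ∈ Finset.range X, blockAvg M (symbolIndicator v a) t ^ 2

lemma blockEnergy_nonneg (v : List α) (M X : ℕ) : 0 ≤ blockEnergy v M X :=
  Finset.sum_nonneg fun _ _ => Finset.sum_nonneg fun _ _ => sq_nonneg _

lemma blockEnergy_one_le (v : List α) (X : ℕ) : blockEnergy v 1 X ≤ X := by
  unfold blockEnergy
  rw [Finset.sum_comm]
  calc ∑ t ∈ Finset.range X, ∑ a, blockAvg 1 (symbolIndicator v a) t ^ 2
      ≤ ∑ t ∈ Finset.range X, ∑ a, symbolIndicator v a t := by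
        refine Finset.sum_le_sum fun t _ => Finset.sum_le_sum fun a _ => ?_
        rw [blockAvg_one]
        exact pow_le_of_le_one (symbolIndicator_nonneg v a t) (symbolIndicator_le_one v a t)
          two_ne_zero
    _ ≤ ∑ _t ∈ Finset.range X, (1 : ℝ) :=
        Finset.sum_le_sum fun t _ => sum_symbolIndicator_le_one v t
    _ = X := by simp

lemma blockEnergy_sub_blockEnergy_mul (hM : 0 < M) (hN : 0 < N) (W : ℕ) (v : List α) :
    blockEnergy v M (M * N * W) - blockEnergy v (M * N) (M * N * W) =
      ∑ a, ∑ t ∈ Finset.range (M * N * W),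
        (blockAvg M (symbolIndicator v a) t - blockAvg (M * N) (symbolIndicator v a) t) ^ 2 := by
  unfold blockEnergy
  rw [← Finset.sum_sub_distrib]
  exact Finset.sum_congr rfl fun a _ => (sum_sq_blockAvg_sub_blockAvg_mul hM hN W _).symm

lemma blockEnergy_mul_le (hM : 0 < M) (hN : 0 < N) (W : ℕ) (v : List α) :
    blockEnergy v (M * N) (M * N * W) ≤ blockEnergy v M (M * N * W) := by
  rw [← sub_nonneg, blockEnergy_sub_blockEnergy_mul hM hN]
  exact Finset.sum_nonneg fun _ _ => Finset.sum_nonneg fun _ _ => sq_nonneg _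

lemma sq_sum_scaleDeviation_le (hM : 0 < M) (hN : 0 < N) {v : List α}
    (hv : v.length ≤ M * N * W) :
    (∑ t ∈ Finset.range v.length, scaleDeviation v M (M * N) t) ^ 2 ≤
      (M * N * W : ℕ) * Fintype.card α *
        (blockEnergy v M (M * N * W) - blockEnergy v (M * N) (M * N * W)) := by
  set X := M * N * W with hX
  calc (∑ t ∈ Finset.range v.length, scaleDeviation v M (M * N) t) ^ 2
      ≤ (∑ t ∈ Finset.range X, scaleDeviation v M (M * N) t) ^ 2 := by
        refine pow_le_pow_left₀ (Finset.sum_nonneg fun t _ => scaleDeviation_nonneg v _ _ t) ?_ 2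
        exact Finset.sum_le_sum_of_subset_of_nonneg (Finset.range_subset_range.2 hv)
          fun t _ _ => scaleDeviation_nonneg v _ _ t
    _ = (∑ p ∈ Finset.range X ×ˢ (Finset.univ : Finset α), |blockAvg M (symbolIndicator v p.2) p.1 -
          blockAvg (M * N) (symbolIndicator v p.2) p.1|) ^ 2 := by
        rw [Finset.sum_product]
        rfl
    _ ≤ X * Fintype.card α * ∑ p ∈ Finset.range X ×ˢ (Finset.univ : Finset α),
          |blockAvg M (symbolIndicator v p.2) p.1 -
            blockAvg (M * N) (symbolIndicator v p.2) p.1| ^ 2 := by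
        refine sq_sum_le_card_mul_sum_sq.trans_eq ?_
        rw [Finset.card_product, Finset.card_range, Finset.card_univ, Nat.cast_mul]
    _ = X * Fintype.card α * (blockEnergy v M X - blockEnergy v (M * N) X) := by
        rw [blockEnergy_sub_blockEnergy_mul hM hN, Finset.sum_product_right]
        simp only [sq_abs, ← hX]

lemma card_mul_le_of_le_sub {K : ℕ} {E : ℕ → ℝ} {a : ℝ} (hE : ∀ k < K, E (k + 1) ≤ E k)
    (S : Finset (Fin K)) (hS : ∀ k ∈ S, a ≤ E k - E (k + 1)) : S.card * a ≤ E 0 - E K :=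
  calc S.card * a = ∑ _k ∈ S, a := by rw [Finset.sum_const, nsmul_eq_mul]
    _ ≤ ∑ k ∈ S, (E k - E (k + 1)) := Finset.sum_le_sum hS
    _ ≤ ∑ k : Fin K, (E k - E (k + 1)) :=
        Finset.sum_le_sum_of_subset_of_nonneg S.subset_univ fun k _ _ => sub_nonneg.2 (hE k k.2)
    _ = E 0 - E K := by
        rw [← Finset.sum_range fun k => E k - E (k + 1), Finset.sum_range_sub']

end BlockEnergy

section ScaleWords

variable {q : ℕ} [NeZero q] {N K : ℕ}

/-- The cyclic run word of length `q * N ^ (2 * K + 1)` whose runs have length `N ^ (2 * k + 1)`. -/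
def scaleWord (q N K k : ℕ) [NeZero q] : List (Fin q) :=
  runs (Fin.ofNat q) (N ^ (2 * k) * N) (q * N ^ (2 * (K - k)))

lemma pow_mul_mul_pow {k : ℕ} (hk : k ≤ K) :
    N ^ (2 * k) * N * N ^ (2 * (K - k)) = N ^ (2 * K + 1) := by
  rw [← pow_succ, ← pow_add]
  congr 1
  omega

lemma pow_mul_eq_pow_mul_sq_mul {k : ℕ} (hk : k < K) (V : ℕ) :
    N ^ (2 * K + 1) * V = N ^ (2 * k) * N ^ 2 * (N ^ (2 * (K - k) - 1) * V) := by
  rw [← mul_assoc, ← pow_add, ← pow_add]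
  congr 2
  omega

lemma length_scaleWord {k : ℕ} (hk : k ≤ K) : (scaleWord q N K k).length = q * N ^ (2 * K + 1) := by
  rw [scaleWord, length_runs, mul_left_comm, pow_mul_mul_pow hk]

lemma scaleWord_injective (hq : 2 ≤ q) (hN : 2 ≤ N) :
    Function.Injective fun k : Fin K => scaleWord q N K k := by
  have hne : ∀ k l : ℕ, k < l → scaleWord q N K k ≠ scaleWord q N K l := fun k l hkl => by
    have hpos : ∀ i, 0 < N ^ i := fun i => pow_pos (by omega) i
    refine runs_ne_runs (fun h => ?_) (Nat.mul_pos (hpos _) (by omega)) ?_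
      (hq.trans (Nat.le_mul_of_pos_right q (hpos _))) (Nat.mul_pos (by omega) (hpos _))
    · simp [Fin.ext_iff, Nat.mod_eq_of_lt (show 1 < q by omega)] at h
    · exact Nat.mul_lt_mul_of_pos_right (Nat.pow_lt_pow_right (by omega) (by omega)) (by omega)
  intro k l h
  by_contra hkl
  rcases lt_or_gt_of_ne (Fin.val_ne_of_ne hkl) with hlt | hlt
  · exact hne k l hlt h
  · exact hne l k hlt h.symm

lemma sq_le_blockEnergy_sub_of_indelCost_lt {z V k : ℕ} {ε : ℝ} (hε : 0 ≤ ε) (hN : 0 < N)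
    (hz : 1 ≤ z) (hzq : z + 1 ≤ q) (hk : k < K) {v : List (Fin q)}
    (hv : v.length ≤ N ^ (2 * K + 1) * V)
    (hNV : 4 * (q : ℝ) ^ 2 + 2 * q ^ 2 * V ≤ N * (ε / 2))
    (hcost : indelCost z (scaleWord q N K k) v <
      (1 - ε) * (regionBound q z * (q * N ^ (2 * K + 1) : ℕ))) :
    (ε / (4 * q) * N ^ (2 * K + 1)) ^ 2 ≤ N ^ (2 * K + 1) * V * q *
      (blockEnergy v (N ^ (2 * k)) (N ^ (2 * K + 1) * V) -
        blockEnergy v (N ^ (2 * (k + 1))) (N ^ (2 * K + 1) * V)) := by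
  have hX := pow_mul_eq_pow_mul_sq_mul (N := N) hk V
  have hU : (N : ℝ) ^ (2 * K + 1) = (N ^ (2 * k) : ℕ) * N * (N ^ (2 * (K - k)) : ℕ) := by
    exact_mod_cast (pow_mul_mul_pow hk.le).symm
  have hM : 0 < N ^ (2 * k) := pow_pos hN _
  have hdev : ε / (4 * q) * N ^ (2 * K + 1) ≤
      ∑ t ∈ Finset.range v.length, scaleDeviation v (N ^ (2 * k)) (N ^ (2 * k) * N ^ 2) t := by
    rw [hU]
    refine le_sum_scaleDeviation_of_indelCost_lt hε hM hN hz hzq ?_ hNV ?_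
    · rwa [pow_mul_mul_pow hk.le]
    · rwa [← hU, ← Nat.cast_pow, ← Nat.cast_mul]
  have henergy := sq_sum_scaleDeviation_le hM (pow_pos hN 2) (hv.trans_eq hX)
  rw [← hX, Fintype.card_fin] at henergy
  rw [show N ^ (2 * (k + 1)) = N ^ (2 * k) * N ^ 2 by ring]
  refine (pow_le_pow_left₀ (by positivity) hdev 2).trans (henergy.trans_eq ?_)
  push_cast
  rfl

lemma card_indelCost_lt_le {z V : ℕ} {ε : ℝ} (hε : 0 < ε) (hN : 0 < N) (hz : 1 ≤ z)
    (hzq : z + 1 ≤ q) {v : List (Fin q)} (hv : v.length ≤ N ^ (2 * K + 1) * V)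
    (hNV : 4 * (q : ℝ) ^ 2 + 2 * q ^ 2 * V ≤ N * (ε / 2)) :
    (Finset.card {k : Fin K | indelCost z (scaleWord q N K k) v <
      (1 - ε) * (regionBound q z * (q * N ^ (2 * K + 1) : ℕ))} : ℝ) ≤
        V ^ 2 * q / (ε / (4 * q)) ^ 2 := by
  have hq : (0 : ℝ) < q := Nat.cast_pos.2 (by omega)
  set S : Finset (Fin K) := {k : Fin K | indelCost z (scaleWord q N K k) v <
      (1 - ε) * (regionBound q z * (q * N ^ (2 * K + 1) : ℕ))} with hS
  set U : ℝ := (N : ℝ) ^ (2 * K + 1)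
  set E : ℕ → ℝ := fun k => blockEnergy v (N ^ (2 * k)) (N ^ (2 * K + 1) * V) with hE
  have hE_anti : ∀ k < K, E (k + 1) ≤ E k := fun k hk => by
    have hX := pow_mul_eq_pow_mul_sq_mul (N := N) hk V
    simp only [hE, hX, mul_add_one, pow_add _ (2 * k) 2]
    exact blockEnergy_mul_le (pow_pos hN _) (pow_pos hN _) _ v
  have hE_le : E 0 - E K ≤ U * V := by
    have h₀ := blockEnergy_one_le v (N ^ (2 * K + 1) * V)
    have hK := blockEnergy_nonneg v (N ^ (2 * K)) (N ^ (2 * K + 1) * V)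
    push_cast at h₀
    simp only [hE, mul_zero, pow_zero]
    linarith
  have hcard := card_mul_le_of_le_sub (E := fun k => U * V * q * E k)
    (a := (ε / (4 * q) * U) ^ 2)
    (fun k hk => mul_le_mul_of_nonneg_left (hE_anti k hk) (by positivity)) S fun k hk => by
      rw [← mul_sub]
      exact sq_le_blockEnergy_sub_of_indelCost_lt hε.le hN hz hzq k.2 hv hNV
        (by simpa [hS] using hk)
  rw [le_div_iff₀ (by positivity)]
  refine le_of_mul_le_mul_right ?_ (by positivity : 0 < U ^ 2)
  calc S.card * (ε / (4 * q)) ^ 2 * U ^ 2 = S.card * (ε / (4 * q) * U) ^ 2 := by ring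
    _ ≤ U * V * q * (E 0 - E K) := hcard.trans_eq (by ring)
    _ ≤ U * V * q * (U * V) := by gcongr
    _ = V ^ 2 * q * U ^ 2 := by ring

end ScaleWords

lemma exists_words_card_indelCost_lt_le {q : ℕ} (hq : 2 ≤ q) {ε : ℝ} (hε : 0 < ε) (W : ℕ) :
    ∃ L : ℝ, ∀ K G : ℕ, 0 < G → ∃ B, 0 < B ∧ G ∣ B ∧ ∃ w : Fin K → List (Fin q),
      Function.Injective w ∧ (∀ k, (w k).length = B) ∧
        ∀ z, 1 ≤ z → z + 1 ≤ q → ∀ v : List (Fin q), v.length ≤ W * B →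
          (Finset.card {k | indelCost z (w k) v < (1 - ε) * (regionBound q z * B)} : ℝ) ≤ L := by
  have : NeZero q := ⟨by omega⟩
  set V := W * q with hV
  refine ⟨V ^ 2 * q / (ε / (4 * q)) ^ 2, fun K G hG => ?_⟩
  obtain ⟨N₀, hN₀⟩ := exists_nat_ge ((4 * (q : ℝ) ^ 2 + 2 * q ^ 2 * V) / (ε / 2))
  set N := G * (N₀ + 2)
  have hN₀N : N₀ + 2 ≤ N := Nat.le_mul_of_pos_left _ hG
  refine ⟨q * N ^ (2 * K + 1), by positivity, ?_, fun k => scaleWord q N K k,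
    scaleWord_injective hq (by omega), fun k => length_scaleWord k.2.le,
    fun z hz hzq v hv => card_indelCost_lt_le hε (by omega) hz hzq ?_ ?_⟩
  · exact Dvd.dvd.mul_left ((Dvd.intro _ rfl).trans (dvd_pow_self N (by omega))) q
  · rw [hV]
    exact hv.trans_eq (by ring)
  · refine (div_le_iff₀ (by positivity)).1 (hN₀.trans ?_)
    exact_mod_cast (by omega : N₀ ≤ N)

section ConcatWords

variable {α κ : Type*} {w : κ → List α} {B m : ℕ}

/-- The concatenation of the words `w (c 0), …, w (c (m - 1))`. -/
def concatWords (w : κ → List α) (c : Fin m → κ) : List α :=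
  (List.ofFn c).flatMap w

lemma concatWords_cons (w : κ → List α) (k : κ) (c : Fin m → κ) :
    concatWords w (Fin.cons k c : Fin (m + 1) → κ) = w k ++ concatWords w c := by
  simp [concatWords, List.ofFn_succ]

lemma length_concatWords (hw : ∀ k, (w k).length = B) (c : Fin m → κ) :
    (concatWords w c).length = m * B := by
  simp [concatWords, List.length_flatMap, hw, Function.comp_def, List.ofFn_const]

lemma concatWords_injective (hw : ∀ k, (w k).length = B) (hinj : Function.Injective w) :
    Function.Injective (concatWords w : (Fin m → κ) → List α) := by
  induction m with
  | zero => exact Function.injective_of_subsingleton _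
  | succ m ih =>
    intro c d h
    induction c using Fin.consCases with | _ k c =>
    induction d using Fin.consCases with | _ l d =>
    rw [concatWords_cons, concatWords_cons] at h
    obtain ⟨hkl, hcd⟩ := List.append_inj h (by rw [hw, hw])
    rw [hinj hkl, ih hcd]

/-- Rounding the cut point down to a multiple of `g` leaves only `|y| / g + 1` candidates for it,
at an additive cost of `g`. -/
lemma exists_indelCost_take_add_indelCost_drop_le (z : ℕ) {g : ℕ} (hg : 0 < g)
    (x₁ x₂ y : List α) :
    ∃ h ∈ Finset.range (y.length / g + 1),
      indelCost z x₁ (y.take ((h + 1) * g)) + indelCost z x₂ (y.drop (h * g)) ≤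
        indelCost z (x₁ ++ x₂) y + g := by
  obtain ⟨i, hi, hcut⟩ := exists_LCS_append_le x₁ x₂ y
  set h := i / g
  have hlow : h * g ≤ i := Nat.div_mul_le_self i g
  have hhigh : i ≤ (h + 1) * g := by
    rw [add_one_mul]
    exact (Nat.lt_div_mul_add hg).le
  refine ⟨h, Finset.mem_range.2 (Nat.lt_succ_of_le (Nat.div_le_div_right hi)), ?_⟩
  have hLCS : (LCS (x₁ ++ x₂) y : ℝ) ≤
      LCS x₁ (y.take ((h + 1) * g)) + LCS x₂ (y.drop (h * g)) := by
    exact_mod_cast hcut.trans (add_le_add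
      (LCS_mono_right (List.take_prefix_take_left hhigh).sublist)
      (LCS_mono_right (List.drop_suffix_drop_left y hlow).sublist))
  have hlen : ((y.take ((h + 1) * g)).length : ℝ) + (y.drop (h * g)).length ≤ y.length + g := by
    have : (y.take ((h + 1) * g)).length + (y.drop (h * g)).length ≤ y.length + g := by
      rw [List.length_take, List.length_drop, add_one_mul]
      omega
    exact_mod_cast this
  have := mul_le_mul_of_nonneg_left hLCS (by positivity : (0 : ℝ) ≤ 1 + 2 * z)
  unfold indelCost
  rw [List.length_append, Nat.cast_add]
  linarith

end ConcatWords

section ExponentialMoment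

variable {α κ : Type*} [Fintype κ] {w : κ → List α} {z B : ℕ} {μ θ : ℝ}

lemma exp_indelCost_append_le (z : ℕ) {g : ℕ} (hg : 0 < g) (hμ : 0 ≤ μ) (x₁ x₂ y : List α) :
    Real.exp (-μ * indelCost z (x₁ ++ x₂) y) ≤ ∑ h ∈ Finset.range (y.length / g + 1),
      Real.exp (μ * g) * Real.exp (-μ * indelCost z x₁ (y.take ((h + 1) * g))) *
        Real.exp (-μ * indelCost z x₂ (y.drop (h * g))) := by
  obtain ⟨h, hh, hcost⟩ := exists_indelCost_take_add_indelCost_drop_le z hg x₁ x₂ y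
  refine le_trans ?_ (Finset.single_le_sum (f := fun h =>
    Real.exp (μ * g) * Real.exp (-μ * indelCost z x₁ (y.take ((h + 1) * g))) *
      Real.exp (-μ * indelCost z x₂ (y.drop (h * g)))) (fun _ _ => by positivity) hh)
  rw [← Real.exp_add, ← Real.exp_add, Real.exp_le_exp]
  linarith [mul_le_mul_of_nonneg_left hcost hμ]

lemma sum_exp_indelCost_concatWords_le {g : ℕ} (hg : 0 < g) (hμ : 0 ≤ μ) {ρ : ℝ}
    (hρ : ∀ y : List α, Real.exp (μ * g) * ∑ h ∈ Finset.range (y.length / g + 1), ∑ k,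
      Real.exp (-μ * indelCost z (w k) (y.take ((h + 1) * g))) ≤ ρ) (m : ℕ) (y : List α) :
    ∑ c : Fin m → κ, Real.exp (-μ * indelCost z (concatWords w c) y) ≤ ρ ^ m := by
  induction m generalizing y with
  | zero =>
    simpa using mul_nonneg hμ (indelCost_nonneg z (concatWords w default) y)
  | succ m ih =>
    have hρ₀ : 0 ≤ ρ := le_trans (by positivity) (hρ y)
    rw [← (Fin.consEquiv fun _ : Fin (m + 1) => κ).sum_comp fun c =>
      Real.exp (-μ * indelCost z (concatWords w c) y), Fintype.sum_prod_type]
    calc ∑ k, ∑ c : Fin m → κ,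
          Real.exp (-μ * indelCost z (concatWords w (Fin.cons k c : Fin (m + 1) → κ)) y)
        ≤ ∑ k, ∑ c : Fin m → κ, ∑ h ∈ Finset.range (y.length / g + 1),
            Real.exp (μ * g) * Real.exp (-μ * indelCost z (w k) (y.take ((h + 1) * g))) *
              Real.exp (-μ * indelCost z (concatWords w c) (y.drop (h * g))) := by
          refine Finset.sum_le_sum fun k _ => Finset.sum_le_sum fun c _ => ?_
          rw [concatWords_cons]
          exact exp_indelCost_append_le z hg hμ _ _ y
      _ = ∑ h ∈ Finset.range (y.length / g + 1), ∑ k,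
            Real.exp (μ * g) * Real.exp (-μ * indelCost z (w k) (y.take ((h + 1) * g))) *
              ∑ c : Fin m → κ,
                Real.exp (-μ * indelCost z (concatWords w c) (y.drop (h * g))) := by
          simp only [Finset.mul_sum]
          exact (Finset.sum_congr rfl fun k _ => Finset.sum_comm).trans Finset.sum_comm
      _ ≤ ∑ h ∈ Finset.range (y.length / g + 1), ∑ k,
            Real.exp (μ * g) * Real.exp (-μ * indelCost z (w k) (y.take ((h + 1) * g))) *
              ρ ^ m := by
          gcongr with h _ k _
          exact ih _
      _ = (Real.exp (μ * g) * ∑ h ∈ Finset.range (y.length / g + 1), ∑ k,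
            Real.exp (-μ * indelCost z (w k) (y.take ((h + 1) * g)))) * ρ ^ m := by
          simp only [Finset.mul_sum, Finset.sum_mul]
      _ ≤ ρ ^ (m + 1) := by
          rw [pow_succ']
          gcongr
          exact hρ y

lemma sum_exp_le_card_add {f : κ → ℝ} (hμ : 0 ≤ μ) (hf : ∀ k, 0 ≤ f k) :
    ∑ k, Real.exp (-μ * f k) ≤
      Finset.card {k | f k < θ} + Fintype.card κ * Real.exp (-μ * θ) := by
  have hterm : ∀ k, Real.exp (-μ * f k) ≤ (if f k < θ then 1 else 0) + Real.exp (-μ * θ) := by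
    intro k
    split_ifs with h
    · have : Real.exp (-μ * f k) ≤ 1 := by
        rw [Real.exp_le_one_iff]
        linarith [mul_nonneg hμ (hf k)]
      linarith [Real.exp_pos (-μ * θ)]
    · rw [zero_add, Real.exp_le_exp]
      exact mul_le_mul_of_nonpos_left (not_lt.1 h) (neg_nonpos.2 hμ)
  refine (Finset.sum_le_sum fun k _ => hterm k).trans_eq ?_
  rw [Finset.sum_add_distrib, Finset.sum_boole, Finset.sum_const, Finset.card_univ, nsmul_eq_mul]

lemma sum_exp_indelCost_le_of_length (hμ : 0 ≤ μ) (hw : ∀ k, (w k).length = B) (v : List α) :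
    ∑ k, Real.exp (-μ * indelCost z (w k) v) ≤
      Fintype.card κ * Real.exp (-μ * (v.length - B)) := by
  rw [← nsmul_eq_mul, ← Finset.card_univ]
  refine Finset.sum_le_card_nsmul _ _ _ fun k _ => Real.exp_le_exp.2 ?_
  exact mul_le_mul_of_nonpos_left (hw k ▸ length_sub_length_le_indelCost z (w k) v)
    (neg_nonpos.2 hμ)

lemma sum_range_le_mul_add_geometric {f : ℕ → ℝ} {a b x : ℝ} {n H : ℕ} (ha : 0 ≤ a) (hb : 0 ≤ b)
    (hx₀ : 0 ≤ x) (hx : x ≤ 1 / 2) (hfa : ∀ h < H, f h ≤ a) (hfb : ∀ h < n, f h ≤ b * x ^ h) :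
    ∑ h ∈ Finset.range n, f h ≤ H * a + 2 * (b * x ^ H) := by
  have hhead : ∀ j ≤ H, ∑ h ∈ Finset.range j, f h ≤ H * a := fun j hj => by
    calc ∑ h ∈ Finset.range j, f h ≤ ∑ _h ∈ Finset.range j, a :=
          Finset.sum_le_sum fun h hh => hfa h ((Finset.mem_range.1 hh).trans_le hj)
      _ = j * a := by simp
      _ ≤ H * a := by gcongr
  rcases le_total n H with hn | hn
  · exact (hhead n hn).trans (le_add_of_nonneg_right (by positivity))
  · obtain ⟨j, rfl⟩ := Nat.exists_eq_add_of_le hn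
    rw [Finset.sum_range_add]
    refine add_le_add (hhead H le_rfl) ?_
    calc ∑ i ∈ Finset.range j, f (H + i)
        ≤ ∑ i ∈ Finset.range j, b * x ^ H * (1 / 2) ^ i := by
          refine Finset.sum_le_sum fun i hi => (hfb _ (by simpa using hi)).trans ?_
          rw [pow_add, ← mul_assoc]
          gcongr
      _ ≤ 2 * (b * x ^ H) := by
          rw [← Finset.mul_sum, mul_comm 2]
          gcongr
          exact sum_geometric_two_le j

end ExponentialMoment

section SmallBall

variable {α κ : Type*} [Fintype κ] {w : κ → List α} {z B G W m : ℕ} {μ θ L : ℝ}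

lemma sum_exp_indelCost_take_le {g h : ℕ} (hG : 0 < G) (hg : 0 < g) (hgG : g * G = B) (hμ : 0 ≤ μ)
    (hw : ∀ k, (w k).length = B) {y : List α} (hh : h < y.length / g + 1) :
    ∑ k, Real.exp (-(μ / B) * indelCost z (w k) (y.take ((h + 1) * g))) ≤
      Fintype.card κ * Real.exp μ * Real.exp (-(μ / G)) ^ h := by
  have hlen : h * g ≤ (y.take ((h + 1) * g)).length := by
    rw [List.length_take]
    exact le_min (Nat.mul_le_mul_right _ h.le_succ)
      ((Nat.le_div_iff_mul_le hg).1 (Nat.le_of_lt_succ hh))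
  have hlen' : (h : ℝ) * g ≤ (y.take ((h + 1) * g)).length := by exact_mod_cast hlen
  have hB : (B : ℝ) = g * G := by exact_mod_cast hgG.symm
  refine (sum_exp_indelCost_le_of_length (by positivity) hw _).trans ?_
  rw [mul_assoc, ← Real.exp_nat_mul, ← Real.exp_add]
  refine mul_le_mul_of_nonneg_left (Real.exp_le_exp.2 ?_) (by positivity)
  calc -(μ / B) * ((y.take ((h + 1) * g)).length - B) ≤ -(μ / B) * (h * g - B) :=
        mul_le_mul_of_nonpos_left (by linarith) (neg_nonpos.2 (by positivity))
    _ = μ + h * -(μ / G) := by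
        rw [hB]
        field_simp
        ring

lemma exp_mul_sum_range_sum_exp_indelCost_take_le {g : ℕ} (hG : 0 < G) (hg : 0 < g)
    (hgG : g * G = B) (hμ : 0 ≤ μ) (hx : Real.exp (-(μ / G)) ≤ 1 / 2)
    (hw : ∀ k, (w k).length = B) (hθ : θ + 1 ≤ W)
    (hL : ∀ v, v.length ≤ W * B → (Finset.card {k | indelCost z (w k) v < θ * B} : ℝ) ≤ L)
    (y : List α) :
    Real.exp (μ / B * g) * ∑ h ∈ Finset.range (y.length / g + 1), ∑ k,
        Real.exp (-(μ / B) * indelCost z (w k) (y.take ((h + 1) * g))) ≤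
      Real.exp (μ / G) * (W * G * L + Fintype.card κ * ((W * G + 2) * Real.exp (-μ * θ))) := by
  have hL₀ : 0 ≤ L := (Nat.cast_nonneg _).trans (hL [] (Nat.zero_le _))
  have hB : (B : ℝ) = g * G := by exact_mod_cast hgG.symm
  have hfirst : ∀ h < W * G,
      ∑ k, Real.exp (-(μ / B) * indelCost z (w k) (y.take ((h + 1) * g))) ≤
        L + Fintype.card κ * Real.exp (-μ * θ) := by
    intro h hh
    have hlen : (y.take ((h + 1) * g)).length ≤ W * B :=
      calc (y.take ((h + 1) * g)).length ≤ (h + 1) * g := List.length_take_le _ _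
        _ ≤ W * G * g := Nat.mul_le_mul_right _ hh
        _ = W * B := by rw [← hgG, mul_assoc, mul_comm G]
    have hexp : -(μ / B) * (θ * B) = -μ * θ := by
      rw [hB]
      field_simp
    rw [← hexp]
    exact (sum_exp_le_card_add (by positivity) fun k => indelCost_nonneg z (w k) _).trans
      (add_le_add_left (hL _ hlen) _)
  have htail : Real.exp μ * Real.exp (-(μ / G)) ^ (W * G) ≤ Real.exp (-μ * θ) := by
    rw [← Real.exp_nat_mul, ← Real.exp_add, Real.exp_le_exp]
    have : ((W * G : ℕ) : ℝ) * -(μ / G) = -(μ * W) := by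
      push_cast
      field_simp
    rw [this]
    linarith [mul_le_mul_of_nonneg_left hθ hμ]
  have hexp : μ / B * g = μ / G := by
    rw [hB]
    field_simp
  rw [hexp]
  refine mul_le_mul_of_nonneg_left ?_ (Real.exp_pos _).le
  refine (sum_range_le_mul_add_geometric (by positivity) (by positivity) (Real.exp_pos _).le hx
    hfirst fun h hh => sum_exp_indelCost_take_le hG hg hgG hμ hw hh).trans ?_
  have := mul_le_mul_of_nonneg_left htail (Nat.cast_nonneg (α := ℝ) (Fintype.card κ))
  push_cast
  linarith

lemma card_le_mul_pow_le_of_sum_exp_le {ι : Type*} [Fintype ι] {f : ι → ℝ} {s ρ A C : ℝ}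
    (hμ : 0 ≤ μ) (hA : 0 ≤ A) (hρ₀ : 0 ≤ ρ)
    (hρ : ∑ i, Real.exp (-μ * f i) ≤ ρ ^ m) (hC : Real.exp (μ * s) * ρ * A ≤ C) :
    (Finset.card {i | f i ≤ s * m} : ℝ) * A ^ m ≤ C ^ m := by
  have hmarkov : (Finset.card {i | f i ≤ s * m} : ℝ) ≤ Real.exp (μ * s) ^ m * ρ ^ m := by
    calc (Finset.card {i | f i ≤ s * m} : ℝ) = ∑ i with f i ≤ s * m, (1 : ℝ) := by simp
      _ ≤ ∑ i with f i ≤ s * m, Real.exp (μ * s) ^ m * Real.exp (-μ * f i) := by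
          refine Finset.sum_le_sum fun i hi => ?_
          rw [← Real.exp_nat_mul, ← Real.exp_add, Real.one_le_exp_iff]
          linarith [mul_le_mul_of_nonneg_left (Finset.mem_filter.1 hi).2 hμ]
      _ ≤ ∑ i, Real.exp (μ * s) ^ m * Real.exp (-μ * f i) :=
          Finset.sum_le_univ_sum_of_nonneg fun i => by positivity
      _ ≤ Real.exp (μ * s) ^ m * ρ ^ m := by
          rw [← Finset.mul_sum]
          gcongr
  calc (Finset.card {i | f i ≤ s * m} : ℝ) * A ^ m
      ≤ Real.exp (μ * s) ^ m * ρ ^ m * A ^ m := by gcongr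
    _ = (Real.exp (μ * s) * ρ * A) ^ m := by rw [mul_pow, mul_pow]
    _ ≤ C ^ m := by gcongr

lemma eventually_mul_exp_neg_mul_le {a b t : ℝ} (hb : 0 < b) (ht : 0 < t) :
    ∀ᶠ μ in Filter.atTop, a * Real.exp (-(μ * b)) ≤ t := by
  have hlim := (Real.tendsto_exp_neg_atTop_nhds_zero.comp
    (Filter.tendsto_id.atTop_mul_const hb)).const_mul a
  rw [mul_zero] at hlim
  exact hlim.eventually_le_const ht

lemma exp_mul_mul_le {A η C : ℝ} (hμ : 0 ≤ μ) (hA : 0 ≤ A) (hη : 0 < η) (hL : 0 ≤ L)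
    (hC₀ : 0 ≤ C) (hG : 2 / η ≤ G) (hθ : θ + 1 ≤ W)
    (hexp : (W * G + 2) * A * Real.exp (-(μ * (η / 2))) ≤ 1 / 2)
    (hC : 2 * (A * Real.exp (μ * W) * (W * G * L)) ≤ C) :
    Real.exp (μ * (θ - η)) *
      (Real.exp (μ / G) * (W * G * L + C * ((W * G + 2) * Real.exp (-μ * θ)))) * A ≤ C := by
  have hG' : 1 / (G : ℝ) ≤ η / 2 := by
    have := one_div_le_one_div_of_le (by positivity) hG
    rwa [one_div_div] at this
  have hmain : Real.exp (μ * (θ - η)) * Real.exp (μ / G) ≤ Real.exp (μ * W) := by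
    rw [← Real.exp_add, Real.exp_le_exp, div_eq_mul_one_div, ← mul_add]
    exact mul_le_mul_of_nonneg_left (by linarith) hμ
  have hbulk : Real.exp (μ * (θ - η)) * Real.exp (μ / G) * Real.exp (-μ * θ) ≤
      Real.exp (-(μ * (η / 2))) := by
    rw [← Real.exp_add, ← Real.exp_add, Real.exp_le_exp, div_eq_mul_one_div]
    linarith [mul_le_mul_of_nonneg_left hG' hμ]
  calc _ = A * (Real.exp (μ * (θ - η)) * Real.exp (μ / G)) * (W * G * L) + C * ((W * G + 2) * A *
        (Real.exp (μ * (θ - η)) * Real.exp (μ / G) * Real.exp (-μ * θ))) := by ring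
    _ ≤ A * Real.exp (μ * W) * (W * G * L) +
        C * ((W * G + 2) * A * Real.exp (-(μ * (η / 2)))) := by gcongr
    _ ≤ C / 2 + C * (1 / 2) := by
        gcongr
        linarith
    _ = C := by ring

lemma exists_forall_card_indelCost_concatWords_le_mul_pow_le (α : Type*) (W : ℕ) (L : ℝ) {A η : ℝ}
    (hA : 0 ≤ A) (hη : 0 < η) :
    ∃ G, 0 < G ∧ ∃ K₀ : ℕ, ∀ K, K₀ ≤ K → ∀ B, 0 < B → G ∣ B → ∀ w : Fin K → List α,
      (∀ k, (w k).length = B) → ∀ (z : ℕ) (θ : ℝ), θ + 1 ≤ W →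
      (∀ v, v.length ≤ W * B → (Finset.card {k | indelCost z (w k) v < θ * B} : ℝ) ≤ L) →
      ∀ (m : ℕ) (y : List α), (Finset.card {c : Fin m → Fin K |
        indelCost z (concatWords w c) y ≤ (θ - η) * (m * B)} : ℝ) * A ^ m ≤ (K : ℝ) ^ m := by
  obtain ⟨G, hG⟩ := exists_nat_ge (2 / η)
  have hG₀ : 0 < G := Nat.cast_pos.1 ((by positivity : 0 < 2 / η).trans_le hG)
  obtain ⟨μ, hμ, hx, hexp⟩ := ((Filter.eventually_ge_atTop (0 : ℝ)).and
    ((eventually_mul_exp_neg_mul_le (a := 1) (b := 1 / G) (by positivity) one_half_pos).and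
      (eventually_mul_exp_neg_mul_le (a := (W * G + 2) * A) (half_pos hη) one_half_pos))).exists
  rw [one_mul, mul_one_div] at hx
  obtain ⟨K₀, hK₀⟩ := exists_nat_ge (2 * (A * Real.exp (μ * W) * (W * G * L)))
  refine ⟨G, hG₀, K₀, fun K hK B hB ⟨g, hg⟩ w hw z θ hθ hL m y => ?_⟩
  have hL₀ : 0 ≤ L := (Nat.cast_nonneg _).trans (hL [] (Nat.zero_le _))
  have hg₀ : 0 < g := Nat.pos_of_mul_pos_left (hg ▸ hB)
  have hmoment := sum_exp_indelCost_concatWords_le (w := w) (z := z) hg₀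
    (by positivity : 0 ≤ μ / B)
    (exp_mul_sum_range_sum_exp_indelCost_take_le hG₀ hg₀ (by rw [hg, mul_comm]) hμ hx hw hθ hL)
    m y
  rw [Fintype.card_fin] at hmoment
  have hs : μ / B * ((θ - η) * B) = μ * (θ - η) := by field_simp
  have := card_le_mul_pow_le_of_sum_exp_le (s := (θ - η) * B) (by positivity) hA
    (by positivity) hmoment (hs ▸ exp_mul_mul_le hμ hA hη hL₀ K.cast_nonneg hG hθ hexp
      (hK₀.trans (Nat.cast_le.2 hK)))
  simpa only [mul_assoc, mul_comm (B : ℝ)] using this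

end SmallBall

section InnerCode

variable {q m : ℕ}

/-- The least insertion and deletion rates `(|y| - LCS x y) / |x|` and `(|x| - LCS x y) / |x|`
taking `x` to `y` lie in `ρ` times the feasibility region `F_q`. -/
def InIndelRegion (ρ : ℝ) (x y : List (Fin q)) : Prop :=
  ∃ z : ℕ, 1 ≤ z ∧ z + 1 ≤ q ∧ indelCost z x y ≤ ρ * (regionBound q z * x.length)

open Classical in
lemma card_exists_mul_pow_le {ι : Type*} [Fintype ι] {P : ℕ → ι → Prop} {A C : ℝ} (hA : 0 ≤ A)
    (hm : 0 < m) (hq : 0 < q)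
    (hP : ∀ z, 1 ≤ z → z + 1 ≤ q → (Finset.card {i | P z i} : ℝ) * (A * q) ^ m ≤ C) (hC : 0 ≤ C) :
    (Finset.card {i | ∃ z, 1 ≤ z ∧ z + 1 ≤ q ∧ P z i} : ℝ) * A ^ m ≤ C := by
  have hsub : ({i | ∃ z, 1 ≤ z ∧ z + 1 ≤ q ∧ P z i} : Finset ι) ⊆
      (Finset.Ico 1 q).biUnion fun z => {i | P z i} := fun i hi => by
    simpa [Nat.succ_le_iff, and_assoc] using hi
  have hcard : (Finset.card {i | ∃ z, 1 ≤ z ∧ z + 1 ≤ q ∧ P z i} : ℝ) ≤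
      ∑ z ∈ Finset.Ico 1 q, (Finset.card {i | P z i} : ℝ) := by
    exact_mod_cast (Finset.card_le_card hsub).trans Finset.card_biUnion_le
  have hqm : (q : ℝ) ≤ (q : ℝ) ^ m := le_self_pow₀ (by exact_mod_cast hq) hm.ne'
  refine le_of_mul_le_mul_right ?_ (by exact_mod_cast hq : (0 : ℝ) < q)
  calc (Finset.card {i | ∃ z, 1 ≤ z ∧ z + 1 ≤ q ∧ P z i} : ℝ) * A ^ m * q
      ≤ (∑ z ∈ Finset.Ico 1 q, (Finset.card {i | P z i} : ℝ)) * A ^ m * (q : ℝ) ^ m := by gcongr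
    _ = ∑ z ∈ Finset.Ico 1 q, (Finset.card {i | P z i} : ℝ) * (A * q) ^ m := by
        rw [mul_assoc, ← mul_pow, Finset.sum_mul]
    _ ≤ ∑ _z ∈ Finset.Ico 1 q, C := Finset.sum_le_sum fun z hz =>
        hP z (Finset.mem_Ico.1 hz).1 (Finset.mem_Ico.1 hz).2
    _ ≤ C * q := by
        rw [Finset.sum_const, Nat.card_Ico, nsmul_eq_mul, mul_comm]
        gcongr
        exact Nat.sub_le q 1

open Classical in
theorem exists_inner_code (hq : 2 ≤ q) {ε : ℝ} (hε : 0 < ε) :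
    ∃ K B, 4 ≤ K ∧ 0 < B ∧ ∃ w : Fin K → List (Fin q), Function.Injective w ∧
      (∀ k, (w k).length = B) ∧ ∀ m, 0 < m → ∀ y,
      (Finset.card {c : Fin m → Fin K | InIndelRegion (1 - ε / 2) (concatWords w c) y} : ℝ) *
        8 ^ m ≤ (K : ℝ) ^ m := by
  obtain ⟨L, hwords⟩ := exists_words_card_indelCost_lt_le hq (by positivity : 0 < ε / 4)
    (1 + 2 * q)
  obtain ⟨G, hG, K₀, hball⟩ := exists_forall_card_indelCost_concatWords_le_mul_pow_le (Fin q)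
    (1 + 2 * q) L (A := 8 * q) (η := ε / 4) (by positivity) (by positivity)
  obtain ⟨B, hB, hGB, w, hinj, hw, hbad⟩ := hwords (max 4 K₀) G hG
  refine ⟨max 4 K₀, B, le_max_left _ _, hB, w, hinj, hw, fun m hm y => ?_⟩
  refine card_exists_mul_pow_le (by norm_num) hm (by omega) (fun z hz hzq => ?_) (by positivity)
  have hzq' : (z : ℝ) + 1 ≤ q := by exact_mod_cast hzq
  have hbound : (1 - ε / 4) * regionBound q z ≤ 2 * z :=
    (mul_le_of_le_one_left (regionBound_nonneg hzq) (by linarith)).trans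
      (regionBound_le_two_mul q z)
  refine le_trans ?_ (hball _ (le_max_right _ _) B hB hGB w hw z ((1 - ε / 4) * regionBound q z)
    (by push_cast; linarith) (fun v hv => by simpa only [mul_assoc] using hbad z hz hzq v hv) m y)
  have hslack : (1 - ε / 2) * regionBound q z ≤ (1 - ε / 4) * regionBound q z - ε / 4 := by
    linarith [mul_le_mul_of_nonneg_left (one_le_regionBound hz hzq) hε.le]
  refine mul_le_mul_of_nonneg_right (Nat.cast_le.2 (Finset.card_le_card
    (Finset.monotone_filter_right _ fun c _ hc => hc.trans ?_))) (by positivity)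
  rw [length_concatWords hw, ← mul_assoc, Nat.cast_mul]
  gcongr

end InnerCode

section OuterCode

variable {X ι : Type*} [Fintype X] [DecidableEq X] {S : ι → Finset X} {Y : Finset ι} {A b : ℝ}

lemma sum_compl_pow_card_insert_inter_le (hA : 0 ≤ A) (C T : Finset X) :
    ∑ x ∈ Cᶜ, A ^ (insert x C ∩ T).card ≤ A ^ (C ∩ T).card * (Cᶜ.card + A * T.card) := by
  have hterm : ∀ x ∈ Cᶜ, A ^ (insert x C ∩ T).card ≤
      A ^ (C ∩ T).card * (1 + A * if x ∈ T then 1 else 0) := by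
    intro x hx
    have hxC : x ∉ C := Finset.mem_compl.1 hx
    by_cases hxT : x ∈ T
    · rw [Finset.insert_inter_of_mem hxT,
        Finset.card_insert_of_notMem fun h => hxC (Finset.mem_inter.1 h).1, pow_succ, if_pos hxT]
      gcongr
      linarith
    · rw [Finset.insert_inter_of_notMem hxT, if_neg hxT, mul_zero, add_zero, mul_one]
  refine (Finset.sum_le_sum hterm).trans ?_
  rw [← Finset.mul_sum, Finset.sum_add_distrib, ← Finset.mul_sum, Finset.sum_boole,
    Finset.sum_const, nsmul_one]
  gcongr
  exact fun x hx => (Finset.mem_filter.1 hx).2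

lemma exists_notMem_sum_pow_card_insert_inter_le (hA : 0 ≤ A) (hb : 0 ≤ b)
    (hS : ∀ y ∈ Y, ((S y).card : ℝ) ≤ b * Fintype.card X) {C : Finset X}
    (hC : 2 * C.card ≤ Fintype.card X) (hX : 0 < Fintype.card X) :
    ∃ x ∉ C, ∑ y ∈ Y, A ^ (insert x C ∩ S y).card ≤
      (1 + 2 * A * b) * ∑ y ∈ Y, A ^ (C ∩ S y).card := by
  have hcompl := Finset.card_add_card_compl C
  have hnonempty : Cᶜ.Nonempty := Finset.card_pos.1 (by omega)
  have hX₂ : (Fintype.card X : ℝ) ≤ 2 * Cᶜ.card := by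
    exact_mod_cast (by omega : Fintype.card X ≤ 2 * Cᶜ.card)
  have haverage : ∑ x ∈ Cᶜ, ∑ y ∈ Y, A ^ (insert x C ∩ S y).card ≤
      ∑ _x ∈ Cᶜ, (1 + 2 * A * b) * ∑ y ∈ Y, A ^ (C ∩ S y).card := by
    rw [Finset.sum_comm, Finset.sum_const, nsmul_eq_mul, ← mul_assoc, Finset.mul_sum]
    refine Finset.sum_le_sum fun y hy => (sum_compl_pow_card_insert_inter_le hA C (S y)).trans ?_
    rw [mul_comm]
    gcongr
    calc (Cᶜ.card : ℝ) + A * (S y).card ≤ Cᶜ.card + A * (b * (2 * Cᶜ.card)) := by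
          gcongr
          exact (hS y hy).trans (by gcongr)
      _ = Cᶜ.card * (1 + 2 * A * b) := by ring
  obtain ⟨x, hx, hle⟩ := Finset.exists_le_of_sum_le hnonempty haverage
  exact ⟨x, Finset.mem_compl.1 hx, hle⟩

lemma exists_card_eq_sum_pow_card_inter_le (hA : 0 ≤ A) (hb : 0 ≤ b)
    (hS : ∀ y ∈ Y, ((S y).card : ℝ) ≤ b * Fintype.card X) {M : ℕ}
    (hM : 2 * M ≤ Fintype.card X) :
    ∃ C : Finset X, C.card = M ∧
      ∑ y ∈ Y, A ^ (C ∩ S y).card ≤ (1 + 2 * A * b) ^ M * Y.card := by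
  induction M with
  | zero => exact ⟨∅, by simp⟩
  | succ M ih =>
    obtain ⟨C, hC, hsum⟩ := ih (by omega)
    obtain ⟨x, hx, hle⟩ :=
      exists_notMem_sum_pow_card_insert_inter_le hA hb hS (C := C) (by omega) (by omega)
    refine ⟨insert x C, by rw [Finset.card_insert_of_notMem hx, hC], hle.trans ?_⟩
    exact (mul_le_mul_of_nonneg_left hsum (by positivity)).trans_eq (by ring)

lemma one_add_two_mul_two_pow_div_pow_le {m : ℕ} (hm : 0 < m) :
    (1 + 2 * (2 : ℝ) ^ m * (1 / 8 ^ m)) ^ 2 ^ m ≤ 3 := by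
  have h₂ : (2 : ℝ) ≤ 2 ^ m := le_self_pow₀ one_le_two hm.ne'
  have h₈ : (8 : ℝ) ^ m = 2 ^ m * 2 ^ m * 2 ^ m := by
    rw [← mul_pow, ← mul_pow]
    norm_num
  have hexponent : ((2 ^ m : ℕ) : ℝ) * (2 * (2 : ℝ) ^ m * (1 / 8 ^ m)) ≤ 1 := by
    rw [h₈, Nat.cast_pow, Nat.cast_ofNat]
    field_simp
    exact h₂
  calc (1 + 2 * (2 : ℝ) ^ m * (1 / 8 ^ m)) ^ 2 ^ m
      ≤ Real.exp (2 * (2 : ℝ) ^ m * (1 / 8 ^ m)) ^ 2 ^ m := by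
        gcongr
        rw [add_comm]
        exact Real.add_one_le_exp _
    _ = Real.exp (((2 ^ m : ℕ) : ℝ) * (2 * (2 : ℝ) ^ m * (1 / 8 ^ m))) :=
        (Real.exp_nat_mul _ _).symm
    _ ≤ Real.exp 1 := Real.exp_le_exp.2 hexponent
    _ ≤ 3 := Real.exp_one_lt_three.le

theorem exists_card_eq_two_pow_pow_card_inter_le {m : ℕ} (hm : 0 < m)
    (hS : ∀ y ∈ Y, ((S y).card : ℝ) * 8 ^ m ≤ Fintype.card X) (hX : 4 ^ m ≤ Fintype.card X) :
    ∃ C : Finset X, C.card = 2 ^ m ∧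
      ∀ y ∈ Y, ((2 : ℝ) ^ m) ^ (C ∩ S y).card ≤ 3 * Y.card := by
  have hX₂ : 2 * 2 ^ m ≤ Fintype.card X :=
    calc 2 * 2 ^ m ≤ 2 ^ m * 2 ^ m := Nat.mul_le_mul_right _ (Nat.le_self_pow hm.ne' 2)
      _ = 4 ^ m := (mul_pow 2 2 m).symm
      _ ≤ Fintype.card X := hX
  obtain ⟨C, hC, hsum⟩ := exists_card_eq_sum_pow_card_inter_le (S := S) (Y := Y)
    (A := 2 ^ m) (b := 1 / 8 ^ m) (by positivity) (by positivity)
    (fun y hy => by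
      rw [one_div_mul_eq_div, le_div_iff₀ (by positivity)]
      exact hS y hy) hX₂
  refine ⟨C, hC, fun y hy => ?_⟩
  calc ((2 : ℝ) ^ m) ^ (C ∩ S y).card ≤ ∑ y ∈ Y, ((2 : ℝ) ^ m) ^ (C ∩ S y).card :=
        Finset.single_le_sum (f := fun y => ((2 : ℝ) ^ m) ^ (C ∩ S y).card)
          (fun _ _ => by positivity) hy
    _ ≤ (1 + 2 * (2 : ℝ) ^ m * (1 / 8 ^ m)) ^ 2 ^ m * Y.card := hsum
    _ ≤ 3 * Y.card := by
        gcongr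
        exact one_add_two_mul_two_pow_div_pow_le hm

lemma ncard_setOf_length_le (α : Type*) [Fintype α] (N : ℕ) :
    {l : List α | l.length ≤ N}.ncard ≤ (Fintype.card α + 1) ^ N := by
  induction N with
  | zero => simp
  | succ N ih =>
    have hsub : {l : List α | l.length ≤ N + 1} ⊆
        insert [] (Set.image2 List.cons Set.univ {l | l.length ≤ N}) := by
      rintro (_ | ⟨a, l⟩) hl
      · exact Set.mem_insert _ _
      · exact Set.mem_insert_of_mem _ ⟨a, Set.mem_univ a, l, Nat.le_of_succ_le_succ hl, rfl⟩
    have hfin := Set.finite_univ.image2 List.cons (List.finite_length_le α N)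
    calc {l : List α | l.length ≤ N + 1}.ncard
        ≤ (Set.image2 List.cons Set.univ {l : List α | l.length ≤ N}).ncard + 1 :=
          (Set.ncard_le_ncard hsub (hfin.insert _)).trans (Set.ncard_insert_le _ _)
      _ ≤ Fintype.card α * (Fintype.card α + 1) ^ N + (Fintype.card α + 1) ^ N := by
          gcongr
          · rw [← Set.image_uncurry_prod]
            refine (Set.ncard_image_le (Set.finite_univ.prod (List.finite_length_le α N))).trans ?_
            rw [Set.ncard_prod, Set.ncard_univ, Nat.card_eq_fintype_card]
            gcongr
          · exact Nat.one_le_pow _ _ (Nat.succ_pos _)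
      _ = (Fintype.card α + 1) ^ (N + 1) := by ring

end OuterCode

section Decoding

variable {q n : ℕ} {ρ γ δ ε : ℝ}

lemma indelCost_le_of_sublist {α : Type*} {u x y : List α} {D I : ℕ} (z : ℕ) (hux : u.Sublist x)
    (huy : u.Sublist y) (hD : x.length - u.length ≤ D) (hI : y.length - u.length ≤ I) :
    indelCost z x y ≤ I + 2 * z * D := by
  have hu : (u.length : ℝ) ≤ LCS x y := by exact_mod_cast length_le_LCS hux huy
  have hD' : (x.length : ℝ) ≤ D + u.length := by exact_mod_cast Nat.sub_le_iff_le_add.1 hD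
  have hI' : (y.length : ℝ) ≤ I + u.length := by exact_mod_cast Nat.sub_le_iff_le_add.1 hI
  unfold indelCost
  gcongr <;> linarith

lemma inIndelRegion_of_sublist (hγ : 0 ≤ γ) (hδ : 0 ≤ δ) {z : ℕ} (hz : 1 ≤ z) (hzq : z + 1 ≤ q)
    (hγδ : γ + 2 * z * δ ≤ ρ * regionBound q z) {u x y : List (Fin q)} (hux : u.Sublist x)
    (huy : u.Sublist y) (hD : x.length - u.length ≤ ⌊δ * x.length⌋₊)
    (hI : y.length - u.length ≤ ⌊γ * x.length⌋₊) : InIndelRegion ρ x y := by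
  refine ⟨z, hz, hzq, (indelCost_le_of_sublist z hux huy hD hI).trans ?_⟩
  calc (⌊γ * x.length⌋₊ : ℝ) + 2 * z * ⌊δ * x.length⌋₊
      ≤ γ * x.length + 2 * z * (δ * x.length) := by
        gcongr <;> exact Nat.floor_le (by positivity)
    _ = (γ + 2 * z * δ) * x.length := by ring
    _ ≤ ρ * regionBound q z * x.length := by gcongr
    _ = ρ * (regionBound q z * x.length) := mul_assoc _ _ _

lemma InIndelRegion.length_le {x y : List (Fin q)} (h : InIndelRegion ρ x y) (hρ : ρ ≤ 1) :
    y.length ≤ (1 + 2 * q) * x.length := by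
  obtain ⟨z, -, hzq, hcost⟩ := h
  have hzq' : (z : ℝ) ≤ q := by exact_mod_cast (Nat.le_succ z).trans hzq
  have : (y.length : ℝ) ≤ (1 + 2 * q) * x.length :=
    calc (y.length : ℝ) ≤ indelCost z x y + x.length := by
          linarith [length_sub_length_le_indelCost z x y]
      _ ≤ 2 * q * x.length + x.length := by
          gcongr
          refine hcost.trans ((mul_le_of_le_one_left
            (mul_nonneg (regionBound_nonneg hzq) (Nat.cast_nonneg _)) hρ).trans ?_)
          gcongr
          linarith [regionBound_le_two_mul q z]
      _ = (1 + 2 * q) * x.length := by ring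
  exact_mod_cast this

lemma indelCost_le_indelCost_append_add {α : Type*} (z : ℕ) (x p y : List α) :
    indelCost z x y ≤ indelCost z (x ++ p) y + p.length := by
  have hLCS : LCS (x ++ p) y ≤ LCS x y + p.length := by
    obtain ⟨i, -, hcut⟩ := exists_LCS_append_le x p y
    exact hcut.trans (add_le_add (LCS_mono_right (List.take_sublist i y))
      (LCS_le_length_left p _))
  have hLCS' : (LCS (x ++ p) y : ℝ) ≤ LCS x y + p.length := by exact_mod_cast hLCS
  have := mul_le_mul_of_nonneg_left hLCS' (by positivity : (0 : ℝ) ≤ 1 + 2 * z)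
  unfold indelCost
  rw [List.length_append, Nat.cast_add]
  linarith

lemma InIndelRegion.of_append {x p y : List (Fin q)} (h : InIndelRegion (1 - ε) (x ++ p) y)
    (hε : 0 ≤ ε) (hp : 4 * (p.length : ℝ) ≤ ε * x.length) : InIndelRegion (1 - ε / 2) x y := by
  obtain ⟨z, hz, hzq, hcost⟩ := h
  refine ⟨z, hz, hzq, (indelCost_le_indelCost_append_add z x p y).trans ?_⟩
  rw [List.length_append, Nat.cast_add] at hcost
  have hT := one_le_regionBound hz hzq
  have hpad := mul_le_mul_of_nonneg_left hp (by linarith : 0 ≤ regionBound q z)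
  have hp₁ := mul_le_mul_of_nonneg_right hT (Nat.cast_nonneg (α := ℝ) p.length)
  have hp₂ : 0 ≤ ε * (regionBound q z * p.length) := by positivity
  linarith

open Classical in
lemma listDecodable_of_forall_card_le {C : Finset (List (Fin q))} {L : ℝ} (hρ : ρ ≤ 1)
    (hlength : ∀ x ∈ C, x.length = n)
    (hcard : ∀ y : List (Fin q), y.length ≤ (1 + 2 * q) * n →
      (Finset.card {x ∈ C | InIndelRegion ρ x y} : ℝ) ≤ L)
    (hγ : 0 ≤ γ) (hδ : 0 ≤ δ) {z : ℕ} (hz : 1 ≤ z) (hzq : z + 1 ≤ q)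
    (hγδ : γ + 2 * z * δ ≤ ρ * regionBound q z) :
    listDecodable C ⌊δ * n⌋₊ ⌊γ * n⌋₊ L := by
  intro y
  have hregion : ∀ x ∈ C, (∃ u : List (Fin q), u.Sublist x ∧ u.Sublist y ∧
      x.length - u.length ≤ ⌊δ * n⌋₊ ∧ y.length - u.length ≤ ⌊γ * n⌋₊) →
      InIndelRegion ρ x y := by
    rintro x hx ⟨u, hux, huy, hD, hI⟩
    rw [← hlength x hx] at hD hI
    exact inIndelRegion_of_sublist hγ hδ hz hzq hγδ hux huy hD hI
  have hsub : {x | x ∈ C ∧ ∃ u : List (Fin q), u.Sublist x ∧ u.Sublist y ∧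
      x.length - u.length ≤ ⌊δ * n⌋₊ ∧ y.length - u.length ≤ ⌊γ * n⌋₊} ⊆
      ({x ∈ C | InIndelRegion ρ x y} : Finset (List (Fin q))) :=
    fun x ⟨hx, hu⟩ => Finset.mem_coe.2 (Finset.mem_filter.2 ⟨hx, hregion x hx hu⟩)
  refine (Nat.cast_le.2 ((Set.ncard_le_ncard hsub (Finset.finite_toSet _)).trans_eq
    (Set.ncard_coe_finset _))).trans ?_
  by_cases hy : y.length ≤ (1 + 2 * q) * n
  · exact hcard y hy
  · rw [Finset.filter_false_of_mem fun x hx h => hy (hlength x hx ▸ h.length_le hρ),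
      Finset.card_empty, Nat.cast_zero]
    exact (Nat.cast_nonneg _).trans (hcard [] (Nat.zero_le _))

lemma listDecodable.mono {α : Type*} {C : Finset (List α)} {D I : ℕ} {L L' : ℝ}
    (h : listDecodable C D I L) (hL : L ≤ L') : listDecodable C D I L' :=
  fun y => (h y).trans hL

end Decoding

section Code

variable {q B m n : ℕ} {ε : ℝ}

lemma le_of_two_pow_pow_le {k : ℕ} (hm : 0 < m) (hn : n ≤ 2 * (m * B))
    (h : ((2 : ℝ) ^ m) ^ k ≤ 3 * ((q + 1) ^ ((1 + 2 * q) * n) : ℕ)) :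
    k ≤ 2 + 2 * q * (1 + 2 * q) * B := by
  have hpow : 2 ^ (m * k) ≤ 2 ^ (2 + q * ((1 + 2 * q) * n)) :=
    calc 2 ^ (m * k) ≤ 3 * (q + 1) ^ ((1 + 2 * q) * n) := by
          rw [pow_mul]
          exact_mod_cast h
      _ ≤ 4 * (2 ^ q) ^ ((1 + 2 * q) * n) := by
          gcongr
          · norm_num
          · exact Nat.lt_two_pow_self
      _ = 2 ^ (2 + q * ((1 + 2 * q) * n)) := by
          rw [pow_add, pow_mul 2 q]
          norm_num
  refine Nat.le_of_mul_le_mul_left ?_ hm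
  calc m * k ≤ 2 + q * ((1 + 2 * q) * n) := (Nat.pow_le_pow_iff_right one_lt_two).1 hpow
    _ ≤ 2 * m + q * ((1 + 2 * q) * (2 * (m * B))) := by
        gcongr
        omega
    _ = m * (2 + 2 * q * (1 + 2 * q) * B) := by ring

open Classical in
lemma exists_outer_code {K : ℕ} {w : Fin K → List (Fin q)} (hK : 4 ≤ K) (hm : 0 < m)
    (hn : n ≤ 2 * (m * B))
    (hball : ∀ y, (Finset.card {c : Fin m → Fin K |
      InIndelRegion (1 - ε / 2) (concatWords w c) y} : ℝ) * 8 ^ m ≤ (K : ℝ) ^ m) :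
    ∃ C : Finset (Fin m → Fin K), C.card = 2 ^ m ∧
      ∀ y : List (Fin q), y.length ≤ (1 + 2 * q) * n →
        Finset.card {c ∈ C | InIndelRegion (1 - ε / 2) (concatWords w c) y} ≤
          2 + 2 * q * (1 + 2 * q) * B := by
  have hfin := List.finite_length_le (Fin q) ((1 + 2 * q) * n)
  have hcard : hfin.toFinset.card ≤ (q + 1) ^ ((1 + 2 * q) * n) := by
    have := ncard_setOf_length_le (Fin q) ((1 + 2 * q) * n)
    rwa [Set.ncard_eq_toFinset_card _ hfin, Fintype.card_fin] at this
  obtain ⟨C, hC, hlist⟩ := exists_card_eq_two_pow_pow_card_inter_le (Y := hfin.toFinset)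
    (S := fun y => {c : Fin m → Fin K | InIndelRegion (1 - ε / 2) (concatWords w c) y}) hm
    (fun y _ => by simpa using hball y) (by simpa using Nat.pow_le_pow_left hK m)
  refine ⟨C, hC, fun y hy => le_of_two_pow_pow_le hm hn ?_⟩
  rw [← Finset.inter_univ C, ← Finset.inter_filter]
  refine (hlist y (hfin.mem_toFinset.2 hy)).trans ?_
  gcongr

open Classical in
theorem exists_code_card_inIndelRegion_le (hq : 2 ≤ q) (hε : 0 < ε) :
    ∃ B, 0 < B ∧ ∃ n₀, ∀ n, n₀ ≤ n → ∃ C : Finset (List (Fin q)),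
      (∀ x ∈ C, x.length = n) ∧ (∃ m, C.card = 2 ^ m ∧ n ≤ 2 * (m * B)) ∧
      ∀ y : List (Fin q), y.length ≤ (1 + 2 * q) * n →
        Finset.card {x ∈ C | InIndelRegion (1 - ε) x y} ≤ 2 + 2 * q * (1 + 2 * q) * B := by
  obtain ⟨K, B, hK, hB, w, hinj, hw, hball⟩ := exists_inner_code hq hε
  refine ⟨B, hB, ⌈4 / ε⌉₊ * B, fun n hn => ?_⟩
  obtain ⟨m, r, hr, rfl⟩ : ∃ m r, r < B ∧ n = m * B + r :=
    ⟨n / B, n % B, Nat.mod_lt n hB, (Nat.div_add_mod' n B).symm⟩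
  have hεm : 4 / ε ≤ m := Nat.ceil_le.1 (Nat.lt_succ_iff.1 (Nat.lt_of_mul_lt_mul_right
    (hn.trans_lt (by rw [Nat.succ_mul]; omega) : _ < m.succ * B)))
  have hm : 0 < m := Nat.cast_pos.1 ((by positivity : 0 < 4 / ε).trans_le hεm)
  have hn₂ : m * B + r ≤ 2 * (m * B) := by
    have := Nat.le_mul_of_pos_left B hm
    omega
  obtain ⟨C, hC, hlist⟩ := exists_outer_code hK hm hn₂ (hball m hm)
  let pad : List (Fin q) := List.replicate r ⟨0, by omega⟩
  let encode : (Fin m → Fin K) → List (Fin q) := fun c => concatWords w c ++ pad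
  have hencode : Function.Injective encode := fun c d h =>
    concatWords_injective hw hinj (List.append_cancel_right h)
  have hpad : ∀ c : Fin m → Fin K, 4 * (pad.length : ℝ) ≤ ε * (concatWords w c).length := by
    intro c
    rw [length_concatWords hw, List.length_replicate, Nat.cast_mul, ← mul_assoc]
    rw [div_le_iff₀' hε] at hεm
    gcongr
  refine ⟨C.image encode, ?_, ⟨m, ?_, hn₂⟩, fun y hy => ?_⟩
  · simp [encode, pad, length_concatWords hw]
  · rw [Finset.card_image_of_injective _ hencode, hC]
  · rw [Finset.filter_image]
    refine Finset.card_image_le.trans ((Finset.card_le_card ?_).trans (hlist y hy))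
    exact Finset.monotone_filter_right _ fun c _ hc => hc.of_append hε.le (hpad c)

end Code

theorem stmt1_general {q : ℕ} (hq : 2 ≤ q) {ε : ℝ} (hε : 0 < ε) :
    ∃ R : ℝ, 0 < R ∧ ∃ c : ℝ, 0 < c ∧ ∃ n₀ : ℕ, ∀ n : ℕ, n₀ ≤ n →
      ∃ C : Finset (List (Fin q)),
        (∀ x ∈ C, x.length = n) ∧
        (2 : ℝ) ^ (R * n) ≤ (C.card : ℝ) ∧
        ∀ γ δ : ℝ, 0 ≤ γ → 0 ≤ δ →
          (∃ z : ℕ, 1 ≤ z ∧ z ≤ q - 1 ∧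
            γ + 2 * z * δ ≤ (1 - ε) * ((2 * (q : ℝ) - 1) * z - (z : ℝ) ^ 2) / q) →
          listDecodable C ⌊δ * n⌋₊ ⌊γ * n⌋₊ c := by
  obtain ⟨B, hB, n₀, hcode⟩ := exists_code_card_inIndelRegion_le hq hε
  refine ⟨1 / (2 * B), by positivity, (2 + 2 * q * (1 + 2 * q) * B : ℕ), by positivity, n₀,
    fun n hn => ?_⟩
  obtain ⟨C, hlength, ⟨m, hcard, hnm⟩, hlist⟩ := hcode n hn
  refine ⟨C, hlength, ?_, ?_⟩
  · have hrate : 1 / (2 * (B : ℝ)) * n ≤ m := by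
      rw [one_div_mul_eq_div, div_le_iff₀ (by positivity)]
      exact_mod_cast hnm.trans_eq (by ring)
    rw [hcard, Nat.cast_pow, ← Real.rpow_natCast]
    exact Real.rpow_le_rpow_of_exponent_le one_le_two hrate
  · rintro γ δ hγ hδ ⟨z, hz, hzq, hγδ⟩
    exact listDecodable_of_forall_card_le (by linarith) hlength
      (fun y hy => Nat.cast_le.2 (hlist y hy)) hγ hδ hz (by omega)
      (hγδ.trans_eq (mul_div_assoc _ _ _))

theorem stmt1 :
    ∀ q : ℕ, 2 ≤ q →
    ∀ ε : ℝ, ε ∈ Set.Ioo (0 : ℝ) 1 →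
      ∃ R : ℝ, 0 < R ∧ ∃ c : ℝ, 0 < c ∧ ∃ n₀ : ℕ, ∀ n : ℕ, n₀ ≤ n →
        ∃ C : Finset (List (Fin q)),
          (∀ x ∈ C, x.length = n) ∧
          (2 : ℝ) ^ (R * n) ≤ (C.card : ℝ) ∧
          ∀ γ δ : ℝ, 0 ≤ γ → 0 ≤ δ →
            (∃ z : ℕ, 1 ≤ z ∧ z ≤ q - 1 ∧
              γ + 2 * z * δ ≤ (1 - ε) * ((2 * (q : ℝ) - 1) * z - (z : ℝ) ^ 2) / q) →
            listDecodable C ⌊δ * n⌋₊ ⌊γ * n⌋₊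
              (c * (2 : ℝ) ^ (2 ^ (2 ^ logStar n))) := by
  intro q hq ε hε
  obtain ⟨R, hR, c, hc, n₀, hcode⟩ := stmt1_general hq hε.1
  exact ⟨R, hR, c, hc, n₀, fun n hn => (hcode n hn).imp fun C ⟨hlength, hcard, hlist⟩ =>
    ⟨hlength, hcard, fun γ δ hγ hδ hz => (hlist γ δ hγ hδ hz).mono
      (le_mul_of_one_le_right hc.le (one_le_pow₀ one_le_two))⟩⟩
end

section
/- Let q ≥ 2 and 1 ≤ i ≤ q be integers, and set δ = (q−i)/q and γ = i(i−1)/q. Then for every n ≥ 1 and every integer L ≥ 1, every code C ⊆ (Fin q)ⁿ that is list-decodable from ⌈δn⌉ deletions and ⌊γn⌋ insertions with list size L satisfies |C| ≤ L · q^q. (Consequently, no positive-rate family of q-ary insertion-deletion codes can be list-decoded from a δ = (q−i)/q fraction of deletions and a γ = i(i−1)/q fraction of insertions.) -/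
/-! Repeating a word `w` of length `i` exactly `m` times gives a centre containing every word of
length `m` over the letters of `w`. Give the alphabet the structure of a group of order `q` and
let `w` list a translate of a fixed set of `i` letters. Every letter lies in exactly `i` of the
`q` translates, so a codeword `x` of length `n` has on average `n i / q` letters in a translate.
For some translate, `x` thus shares a common subsequence of length `m = ⌊n i / q⌋` with the
corresponding centre, of length `m i`. The `q` centres therefore cover the code, each at most
`L` times. -/

section Alignable

variable {α : Type*}

/-- `y` is reached from `x` by at most `D` deletions and at most `I` insertions: the relation
between a codeword and a received word in `listDecodable`, in the same encoding through a common
subsequence `u`. -/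
def Alignable (D I : ℕ) (x y : List α) : Prop :=
  ∃ u : List α, u.Sublist x ∧ u.Sublist y ∧ x.length - u.length ≤ D ∧ y.length - u.length ≤ I

theorem Alignable.mono {D D' I I' : ℕ} {x y : List α} (h : Alignable D I x y) (hD : D ≤ D')
    (hI : I ≤ I') : Alignable D' I' x y :=
  let ⟨u, hux, huy, hdel, hins⟩ := h
  ⟨u, hux, huy, hdel.trans hD, hins.trans hI⟩

open Classical in
theorem listDecodable.card_filter_alignable_le {C : Finset (List α)} {D I : ℕ} {L : ℝ}
    (hC : listDecodable C D I L) (y : List α) :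
    ((C.filter (Alignable D I · y)).card : ℝ) ≤ L := by
  rw [← Set.ncard_coe_finset, Finset.coe_filter]
  exact hC y

theorem listDecodable.card_le_of_cover {ι : Type*} [Fintype ι] {C : Finset (List α)} {D I : ℕ}
    {L : ℝ} (hC : listDecodable C D I L) (y : ι → List α)
    (hcover : ∀ x ∈ C, ∃ s, Alignable D I x (y s)) :
    (C.card : ℝ) ≤ L * Fintype.card ι := by
  classical
  have hsub : C ⊆ Finset.univ.biUnion fun s ↦ C.filter (Alignable D I · (y s)) := fun x hx ↦ by
    simpa [hx] using hcover x hx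
  calc (C.card : ℝ)
      ≤ ∑ s, ((C.filter (Alignable D I · (y s))).card : ℝ) := by
        exact_mod_cast (Finset.card_le_card hsub).trans Finset.card_biUnion_le
    _ ≤ ∑ _s : ι, L := Finset.sum_le_sum fun s _ ↦ hC.card_filter_alignable_le (y s)
    _ = L * Fintype.card ι := by simp [mul_comm]

theorem sublist_flatten_replicate_length {u w : List α} (h : u ⊆ w) :
    u.Sublist (List.replicate u.length w).flatten := by
  induction u with
  | nil => simp
  | cons a u ih =>
    obtain ⟨ha, hu⟩ := List.cons_subset.mp h
    exact (List.singleton_sublist.mpr ha).append (ih hu)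

theorem alignable_flatten_replicate [DecidableEq α] {x w : List α} {m : ℕ}
    (hm : m ≤ x.countP (· ∈ w)) :
    Alignable (x.length - m) (m * w.length - m) x (List.replicate m w).flatten := by
  set u := (x.filter (· ∈ w)).take m
  have hu : u.length = m := by
    rw [List.length_take, ← List.countP_eq_length_filter, min_eq_left hm]
  have huw : u ⊆ w := fun a ha ↦ by simpa using List.of_mem_filter (List.mem_of_mem_take ha)
  refine ⟨u, (List.take_sublist _ _).trans List.filter_sublist, ?_, by rw [hu], ?_⟩
  · simpa only [hu] using sublist_flatten_replicate_length huw
  · simp [hu]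

end Alignable

section Translates

open scoped Pointwise

variable {G : Type*} [AddGroup G] [Fintype G] [DecidableEq G]

theorem card_filter_mem_vadd_finset (T : Finset G) (a : G) :
    (Finset.univ.filter fun s : G ↦ a ∈ s +ᵥ T).card = T.card := by
  refine Finset.card_equiv ((Equiv.neg G).trans (Equiv.addRight a)) fun s ↦ ?_
  simp [← Finset.neg_vadd_mem_iff]

theorem sum_countP_mem_vadd_finset (T : Finset G) (x : List G) :
    ∑ s : G, x.countP (· ∈ s +ᵥ T) = x.length * T.card := by
  induction x with
  | nil => simp
  | cons a x ih =>
    simp only [List.countP_cons, decide_eq_true_eq, Finset.sum_add_distrib, ih,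
      ← Finset.card_filter, card_filter_mem_vadd_finset, List.length_cons, Nat.succ_mul]

theorem exists_div_le_countP_mem_vadd_finset (T : Finset G) (x : List G) :
    ∃ s : G, x.length * T.card / Fintype.card G ≤ x.countP (· ∈ s +ᵥ T) := by
  obtain ⟨s, -, hs⟩ := Finset.exists_le_of_sum_le (s := Finset.univ) Finset.univ_nonempty
    (f := fun _ : G ↦ x.length * T.card / Fintype.card G)
    (g := fun s ↦ x.countP (· ∈ s +ᵥ T)) <| by
      rw [sum_countP_mem_vadd_finset, Finset.sum_const, Finset.card_univ, smul_eq_mul]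
      exact Nat.mul_div_le _ _
  exact ⟨s, hs⟩

end Translates

open scoped Pointwise in
theorem exists_alignable_cover {α : Type*} [Fintype α] [Nonempty α] {i : ℕ}
    (hi : i ≤ Fintype.card α) (n : ℕ) :
    ∃ y : α → List α, ∀ x : List α, x.length = n →
      ∃ s, Alignable (n - n * i / Fintype.card α)
        (n * i / Fintype.card α * i - n * i / Fintype.card α) x (y s) := by
  classical
  let _ : AddGroup α := (Fintype.equivFin α).addGroup
  obtain ⟨T, -, rfl⟩ := Finset.exists_subset_card_eq (s := (Finset.univ : Finset α)) hi
  set m := n * T.card / Fintype.card α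
  refine ⟨fun s ↦ (List.replicate m (s +ᵥ T).toList).flatten, ?_⟩
  rintro x rfl
  obtain ⟨s, hs⟩ := exists_div_le_countP_mem_vadd_finset T x
  have halign := alignable_flatten_replicate (x := x) (w := (s +ᵥ T).toList) (m := m) (by simpa)
  exact ⟨s, by simpa using halign⟩

section Radii

variable {q i : ℕ} (n : ℕ)

theorem sub_div_le_ceil_deletion_radius (hq : 0 < q) :
    n - n * i / q ≤ ⌈(((q : ℝ) - i) / q) * n⌉₊ := by
  have hradius : (((q : ℝ) - i) / q) * n = n - (n * i : ℕ) / q := by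
    push_cast
    field_simp
  have hceil := Nat.le_ceil ((((q : ℝ) - i) / q) * n)
  have hfloor : n - ⌈(((q : ℝ) - i) / q) * n⌉₊ ≤ n * i / q := by
    rw [← Nat.floor_div_eq_div (K := ℝ), tsub_le_iff_right, ← Nat.floor_add_natCast (by positivity)]
    exact Nat.le_floor (by linarith)
  omega

theorem floor_insertion_radius (hi : 1 ≤ i) :
    ⌊(((i : ℝ) * ((i : ℝ) - 1)) / q) * n⌋₊ = n * i * (i - 1) / q := by
  rw [← Nat.floor_div_eq_div (K := ℝ)]
  push_cast [hi]
  ring_nf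

theorem div_mul_sub_le_floor_insertion_radius (hi : 1 ≤ i) :
    n * i / q * i - n * i / q ≤ ⌊(((i : ℝ) * ((i : ℝ) - 1)) / q) * n⌋₊ := by
  rw [floor_insertion_radius n hi, ← Nat.mul_sub_one, mul_comm, mul_comm (n * i) (i - 1)]
  exact Nat.mul_div_le_mul_div_assoc _ _ _

end Radii

theorem stmt3_general {α : Type*} [Fintype α] {i n : ℕ} {L : ℝ} (hi1 : 1 ≤ i)
    (hi2 : i ≤ Fintype.card α) (C : Finset (List α)) (hC : ∀ x ∈ C, x.length = n)
    (hdec : listDecodable C ⌈(((Fintype.card α : ℝ) - i) / Fintype.card α) * n⌉₊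
      ⌊(((i : ℝ) * ((i : ℝ) - 1)) / Fintype.card α) * n⌋₊ L) :
    (C.card : ℝ) ≤ L * Fintype.card α := by
  have hq : 0 < Fintype.card α := hi1.trans hi2
  have : Nonempty α := Fintype.card_pos_iff.mp hq
  obtain ⟨y, hy⟩ := exists_alignable_cover hi2 n
  refine hdec.card_le_of_cover y fun x hx ↦ ?_
  obtain ⟨s, hs⟩ := hy x (hC x hx)
  exact ⟨s, hs.mono (sub_div_le_ceil_deletion_radius n hq)
    (div_mul_sub_le_floor_insertion_radius n hi1)⟩

theorem stmt3 (q i : ℕ) (hq : 2 ≤ q) (hi1 : 1 ≤ i) (hi2 : i ≤ q)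
    (n L : ℕ) (hn : 1 ≤ n) (hL : 1 ≤ L)
    (C : Finset (List (Fin q))) (hC : ∀ x ∈ C, x.length = n)
    (hdec : listDecodable C ⌈(((q : ℝ) - i) / q) * n⌉₊
      ⌊(((i : ℝ) * ((i : ℝ) - 1)) / q) * n⌋₊ (L : ℝ)) :
    C.card ≤ L * q ^ q := by
  have hcard : (C.card : ℝ) ≤ L * q := by simpa using stmt3_general hi1 (by simpa) C hC (by simpa)
  exact (by exact_mod_cast hcard : C.card ≤ L * q).trans
    (Nat.mul_le_mul_left L (Nat.le_self_pow (by omega) q))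
end
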